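/- Every expansive homeomorphism with the shadowing property of a compact metric space has entropy flexibility: for every 0 ≤ c < h_top(f) there exist a compact f-invariant set Λ_c and an ergodic measure μ_c with h_top(f|_{Λ_c}) = h_{μ_c}(f) = c. -/

import Mathlib

/-!
Fix `0 ≤ c < h_top(f)`. The proof finds a horseshoe for a power `f^[N]` whose entropy exceeds
`c * N`, and inside it realises the value `c` separately by a compact set and by a measure.

*Horseshoe* (`exists_loops`, `exists_coded_horseshoe`). Label the space by finitely many sets of
small diameter. If, for each label `a`, the orbit segments of length `t` that start and end in `a`
had separated sets of size at most `exp (c * t)`, then cutting an orbit at the last visit to its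
first label would bound every separated set by a polynomial times `exp (c * n)`, so that the
entropy would be at most `c` at that scale. Hence some label has more than `exp (c * N)` separated
loops of one length `N`. Loops at the same label can be concatenated in any order into
pseudo-orbits; shadowing produces the corresponding orbits, and expansiveness makes the shadowing
point unique, hence continuous and equivariant in the symbol sequence. This gives a continuous
`π` from the full shift on `m > exp (c * N)` symbols with `f^[N] ∘ π = π ∘ σ`, such that distinct
zeroth symbols are separated at a fixed scale within time `N`.

*Compact set* (`topEntropyOn_codedSet_le`, `le_topEntropyOn_codedSet`). For `0 ≤ t ≤ 1` let `sturm t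
m` be the subshift of sequences in which, on every finite window, the nonzero symbols lie on
wrap-around times of a rotation by `t`. A window of length `L` meets about `t * L` such times and
only `L + 2` patterns of times occur, so the number of words is `m ^ (t * L)` up to subexponential
factors. The first `N` iterates of `π '' sturm t m` form an invariant compact set of entropy `t *
log m / N`, which equals `c` for `t = c * N / log m`.

*Measure* (`exists_Hp_eq`, `ergodic_tower`, `measEntropy_tower`). By continuity some probability
vector `p` on `m` symbols has entropy `c * N`. The measure is the average of the images of the
Bernoulli measure of `p` under `f^[j] ∘ π`, `j < N`. It is ergodic by the zero-one law for
shift-invariant sets (`bern_zero_one`). The entropy of an average of `N` measures differs from the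
average entropy by at most `log N`, so entropy can be computed on sequence space. There the upper
bound holds for every finite partition because it is approximated by a partition into cylinders
(`shEnt_bern_names_le`, using strong subadditivity of Shannon entropy), and the lower bound comes
from the partition that reads the zeroth symbol of `π s`.
-/


open Filter MeasureTheory Set Topology
open scoped ENNReal NNReal

attribute [local instance] PiCountable.metricSpace

namespace EF

/-! ### Topological entropy via separated sets -/

section Entropy

variable {M : Type*} [MetricSpace M]

/-- `Q` is an `(n,ε)`-separated set for `f`. -/
def IsDynSep (f : M → M) (n : ℕ) (ε : ℝ) (Q : Set M) : Prop :=
  Q.Pairwise fun x y => ∃ j : ℕ, j ≤ n ∧ ε < dist (f^[j] x) (f^[j] y)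

/-- Maximal cardinality of an `(n,ε)`-separated subset of `K`. -/
noncomputable def sepCount (f : M → M) (K : Set M) (n : ℕ) (ε : ℝ) : ℕ :=
  sSup {k : ℕ | ∃ Q : Finset M, ↑Q ⊆ K ∧ IsDynSep f n ε ↑Q ∧ Q.card = k}

/-- Topological entropy of `f` on the (not necessarily invariant) set `K`. -/
noncomputable def topEntropyOn (f : M → M) (K : Set M) : EReal :=
  ⨆ (ε : ℝ) (_ : 0 < ε),
    Filter.atTop.limsup fun n : ℕ => ((Real.log (sepCount f K n ε) / n : ℝ) : EReal)

/-- Topological entropy of `f`. -/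
noncomputable def topEntropy (f : M → M) : EReal :=
  topEntropyOn f Set.univ

end Entropy

/-! ### Measure-theoretic (Kolmogorov–Sinai) entropy -/

section MeasEntropy

variable {α : Type*} [MeasurableSpace α]

/-- A finite measurable partition of the whole space. -/
def IsMeasPartition (P : Finset (Set α)) : Prop :=
  (∀ p ∈ P, MeasurableSet p) ∧ ⋃₀ (↑P : Set (Set α)) = Set.univ ∧
    (↑P : Set (Set α)).Pairwise Disjoint

/-- The function `x ↦ - x log x`. -/
noncomputable def negMulLog (x : ℝ) : ℝ := -(x * Real.log x)

/-- Information of the refinement `P ∨ f⁻¹ P ∨ ⋯ ∨ f⁻⁽ⁿ⁻¹⁾ P` with respect to `μ`. -/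
noncomputable def refinedInfo (f : α → α) (μ : Measure α) (P : Finset (Set α)) (n : ℕ) : ℝ :=
  ∑ a : Fin n → {p // p ∈ P},
    negMulLog (μ (⋂ i : Fin n, f^[(i : ℕ)] ⁻¹' ((a i : Set α)))).toReal

/-- Entropy of `f` w.r.t. `μ` and the partition `P`. -/
noncomputable def partEntropy (f : α → α) (μ : Measure α) (P : Finset (Set α)) : ℝ :=
  Filter.atTop.limsup fun n : ℕ => refinedInfo f μ P n / n

/-- Kolmogorov–Sinai entropy of `f` with respect to `μ`. -/
noncomputable def measEntropy (f : α → α) (μ : Measure α) : EReal :=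
  ⨆ (P : Finset (Set α)) (_ : IsMeasPartition P), ((partEntropy f μ P : ℝ) : EReal)

end MeasEntropy

/-! ### Discrete-time dynamics -/

section Discrete

variable {M : Type*} [MetricSpace M]

/-- A set invariant under `f`. -/
def InvSet (f : M → M) (Λ : Set M) : Prop := f '' Λ = Λ

/-- `f` is minimal on the invariant set `Λ`. -/
def MinimalOn (f : M → M) (Λ : Set M) : Prop :=
  ∀ K : Set M, K ⊆ Λ → K.Nonempty → IsClosed K → f '' K = K → K = Λ

variable [MeasurableSpace M]

/-- `f` is uniquely ergodic on `Λ`: there is exactly one invariant Borel probability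
measure supported in `Λ`. -/
def UniquelyErgodicOn (f : M → M) (Λ : Set M) : Prop :=
  ∃! μ : Measure M, IsProbabilityMeasure μ ∧ MeasurePreserving f μ μ ∧ μ Λᶜ = 0

/-- `f` is strictly ergodic on `Λ`: minimal and uniquely ergodic. -/
def StrictlyErgodicOn (f : M → M) (Λ : Set M) : Prop :=
  MinimalOn f Λ ∧ UniquelyErgodicOn f Λ

/-- Entropy flexibility of `f` on an invariant set `S`. -/
def EntropyFlexibleOn (f : M → M) (S : Set M) : Prop :=
  ∀ c : ℝ, 0 ≤ c → (c : EReal) < topEntropyOn f S →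
    ∃ (μ : Measure M) (Λ : Set M), IsProbabilityMeasure μ ∧ Ergodic f μ ∧ μ Sᶜ = 0 ∧
      Λ ⊆ S ∧ IsCompact Λ ∧ f '' Λ = Λ ∧
      topEntropyOn f Λ = (c : EReal) ∧ measEntropy f μ = (c : EReal)

/-- Entropy flexibility of `f` (on the whole space). -/
def EntropyFlexible (f : M → M) : Prop :=
  ∀ c : ℝ, 0 ≤ c → (c : EReal) < topEntropy f →
    ∃ (μ : Measure M) (Λ : Set M), IsProbabilityMeasure μ ∧ Ergodic f μ ∧
      IsCompact Λ ∧ f '' Λ = Λ ∧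
      topEntropyOn f Λ = (c : EReal) ∧ measEntropy f μ = (c : EReal)

end Discrete

/-! ### Shadowing and expansiveness (discrete time) -/

section Shadowing

variable {M : Type*} [MetricSpace M]

/-- The shadowing property for a homeomorphism `f` (full orbits indexed by `ℤ`,
encoded via orbit functions `z` with `z (n+1) = f (z n)`). -/
def ShadowingProperty (f : M → M) : Prop :=
  ∀ ε : ℝ, 0 < ε → ∃ δ : ℝ, 0 < δ ∧ ∀ x : ℤ → M,
    (∀ n : ℤ, dist (f (x n)) (x (n + 1)) ≤ δ) →
    ∃ z : ℤ → M, (∀ n : ℤ, z (n + 1) = f (z n)) ∧ ∀ n : ℤ, dist (z n) (x n) ≤ ε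

/-- The shadowing property relative to an invariant set `Λ`. -/
def ShadowingOn (f : M → M) (Λ : Set M) : Prop :=
  ∀ ε : ℝ, 0 < ε → ∃ δ : ℝ, 0 < δ ∧ ∀ x : ℤ → M, (∀ n : ℤ, x n ∈ Λ) →
    (∀ n : ℤ, dist (f (x n)) (x (n + 1)) ≤ δ) →
    ∃ z : ℤ → M, (∀ n : ℤ, z n ∈ Λ) ∧ (∀ n : ℤ, z (n + 1) = f (z n)) ∧
      ∀ n : ℤ, dist (z n) (x n) ≤ ε

/-- Expansiveness of a homeomorphism, phrased via full orbit functions. -/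
def Expansive (f : M → M) : Prop :=
  ∃ e : ℝ, 0 < e ∧ ∀ z w : ℤ → M,
    (∀ n : ℤ, z (n + 1) = f (z n)) → (∀ n : ℤ, w (n + 1) = f (w n)) →
    (∀ n : ℤ, dist (z n) (w n) ≤ e) → z 0 = w 0

/-- Topological transitivity of `f` on `Λ`. -/
def TransitiveOn (f : M → M) (Λ : Set M) : Prop :=
  ∀ U V : Set M, IsOpen U → IsOpen V → (U ∩ Λ).Nonempty → (V ∩ Λ).Nonempty →
    ∃ n : ℕ, 0 < n ∧ ((f^[n] '' (U ∩ Λ)) ∩ V).Nonempty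

end Shadowing

/-! ### Continuous-time dynamics -/

section Flows

variable {M : Type*} [MetricSpace M]

/-- A set invariant under all time-`t` maps of the flow. -/
def FlowInvSet (φ : Flow ℝ M) (Λ : Set M) : Prop := ∀ t : ℝ, φ.toFun t '' Λ = Λ

/-- Topological entropy of a flow on a set: entropy of its time-one map. -/
noncomputable def flowTopEntropyOn (φ : Flow ℝ M) (K : Set M) : EReal :=
  topEntropyOn (φ.toFun 1) K

/-- Topological entropy of a flow: the entropy of its time-one map. -/
noncomputable def flowTopEntropy (φ : Flow ℝ M) : EReal := topEntropy (φ.toFun 1)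

/-- Minimality of a flow on `Λ`. -/
def FlowMinimalOn (φ : Flow ℝ M) (Λ : Set M) : Prop :=
  ∀ K : Set M, K ⊆ Λ → K.Nonempty → IsClosed K → (∀ t : ℝ, φ.toFun t '' K = K) → K = Λ

variable [MeasurableSpace M]

/-- An invariant measure for a flow. -/
def FlowInvariant (φ : Flow ℝ M) (μ : Measure M) : Prop :=
  ∀ t : ℝ, MeasurePreserving (φ.toFun t) μ μ

/-- An ergodic measure for a flow. -/
def FlowErgodic (φ : Flow ℝ M) (μ : Measure M) : Prop :=
  FlowInvariant φ μ ∧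
    ∀ s : Set M, MeasurableSet s → (∀ t : ℝ, φ.toFun t ⁻¹' s = s) → μ s = 0 ∨ μ s = 1

/-- Measure-theoretic entropy of a flow: entropy of the time-one map. -/
noncomputable def flowMeasEntropy (φ : Flow ℝ M) (μ : Measure M) : EReal :=
  measEntropy (φ.toFun 1) μ

/-- Unique ergodicity of a flow on `Λ`. -/
def FlowUniquelyErgodicOn (φ : Flow ℝ M) (Λ : Set M) : Prop :=
  ∃! μ : Measure M, IsProbabilityMeasure μ ∧ FlowInvariant φ μ ∧ μ Λᶜ = 0

/-- Strict ergodicity of a flow on `Λ`. -/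
def FlowStrictlyErgodicOn (φ : Flow ℝ M) (Λ : Set M) : Prop :=
  FlowMinimalOn φ Λ ∧ FlowUniquelyErgodicOn φ Λ

/-- Entropy flexibility for flows. -/
def FlowEntropyFlexible (φ : Flow ℝ M) : Prop :=
  ∀ c : ℝ, 0 ≤ c → (c : EReal) < flowTopEntropy φ →
    ∃ (μ : Measure M) (Λ : Set M), IsProbabilityMeasure μ ∧ FlowErgodic φ μ ∧
      IsCompact Λ ∧ FlowInvSet φ Λ ∧
      flowTopEntropyOn φ Λ = (c : EReal) ∧ flowMeasEntropy φ μ = (c : EReal)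

end Flows

/-! ### Suspension flows -/

section Suspension

variable {X : Type*} [MetricSpace X] {Λ : Type*} [MetricSpace Λ]

/-- `φ` (a flow on `Λ`) is, on the subset `Γ ⊆ Λ`, the suspension flow of the base
map `f` restricted to `S ⊆ X` under the roof function `ρ`, witnessed by the
embedding `e : X → Λ` of the base. This characterizes the quotient of `S × ℝ` by
`(x, ρ x) ∼ (f x, 0)` with the unit-speed vertical flow. -/
def IsSuspensionOn (f : X → X) (S : Set X) (ρ : X → ℝ) (φ : Flow ℝ Λ) (Γ : Set Λ) : Prop :=
  ∃ e : X → Λ, ContinuousOn e S ∧ (∀ x ∈ S, e x ∈ Γ) ∧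
    (∀ x ∈ S, φ.toFun (ρ x) (e x) = e (f x)) ∧
    (∀ z ∈ Γ, ∃ x ∈ S, ∃ s : ℝ, 0 ≤ s ∧ s < ρ x ∧ φ.toFun s (e x) = z) ∧
    (∀ x ∈ S, ∀ y ∈ S, ∀ s u : ℝ, 0 ≤ s → s < ρ x → 0 ≤ u → u < ρ y →
      φ.toFun s (e x) = φ.toFun u (e y) → x = y ∧ s = u)

end Suspension

/-! ### Symbolic dynamics -/

section Symbolic

/-- The full shift map on `ℤ → A`. -/
def fullShift (A : Type*) : (ℤ → A) → (ℤ → A) := fun x i => x (i + 1)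

variable {A : Type*} [MetricSpace A]

/-- A subshift: a closed shift-invariant subset of the full shift. -/
def IsSubshift (S : Set (ℤ → A)) : Prop :=
  IsClosed S ∧ fullShift A '' S = S

/-- The vertex shift determined by a transition relation `Adj`. -/
def vertexShift {B : Type*} (Adj : B → B → Prop) : Set (ℤ → B) :=
  {x | ∀ i : ℤ, Adj (x i) (x (i + 1))}

/-- A topological conjugacy between two shift spaces (over possibly different
alphabets): a homeomorphism of the subspaces intertwining the shift maps. -/
def ShiftConj {B : Type*} [mB : MetricSpace B] (S : Set (ℤ → A)) (T : Set (ℤ → B)) : Prop :=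
  ∃ h : ↥S ≃ₜ ↥T, ∀ x y : ↥S, (y : ℤ → A) = fullShift A (x : ℤ → A) →
    ((h y : ℤ → B)) = fullShift B ((h x : ℤ → B))

/-- A subshift of finite type: a subshift topologically conjugate to a vertex shift
over some finite alphabet. -/
def IsSFT [Fintype A] (S : Set (ℤ → A)) : Prop :=
  IsSubshift S ∧ ∃ (B : Type) (_ : Fintype B) (mB : MetricSpace B) (Adj : B → B → Prop),
    @ShiftConj A _ B mB S (vertexShift Adj)

/-- The word `w` occurs in some point of `S`. -/
def occursIn (w : List A) (S : Set (ℤ → A)) : Prop :=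
  ∃ x ∈ S, ∃ a : ℤ, ∀ i : Fin w.length, x (a + (i : ℕ)) = w.get i

/-- The words of length `s` in the language of `S`. -/
def langOf (s : ℕ) (S : Set (ℤ → A)) : Set (List A) :=
  {w | w.length = s ∧ occursIn w S}

/-- `r` is a parsing of `x` into words from `𝒲`. -/
def ParsesAt (x : ℤ → A) (𝒲 : Finset (List A)) (r : ℤ → ℤ) : Prop :=
  ∀ j : ℤ, ∃ w ∈ 𝒲, r (j + 1) = r j + w.length ∧
    ∀ i : Fin w.length, x (r j + (i : ℕ)) = w.get i

/-- The renewal system over a finite set of words `𝒲`: all bi-infinite free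
concatenations of words from `𝒲`. -/
def renewalSet (𝒲 : Finset (List A)) : Set (ℤ → A) :=
  {x | ∃ r : ℤ → ℤ, ParsesAt x 𝒲 r}

end Symbolic

/-! ### Horseshoes for flows -/

section Horseshoe

variable {M : Type*} [MetricSpace M]

/-- Auxiliary: `Λ` is a horseshoe of `φ` with symbol space `B`. -/
def HorseshoeWitness (φ : Flow ℝ M) (Λ : Set M) (B : Type) [Fintype B] [MetricSpace B] : Prop :=
  2 ≤ Fintype.card B ∧ ∃ ρ : (ℤ → B) → ℝ, Continuous ρ ∧ (∀ x, 0 < ρ x) ∧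
    IsSuspensionOn (fullShift B) Set.univ ρ φ Λ

/-- A horseshoe of a flow: a compact invariant set on which the flow is conjugate to
a suspension flow over a full shift on at least two symbols. -/
def IsHorseshoe (φ : Flow ℝ M) (Λ : Set M) : Prop :=
  ∃ (B : Type) (iB : Fintype B) (mB : MetricSpace B), @HorseshoeWitness M _ φ Λ B iB mB

end Horseshoe

/-! ### The metric on measures and empirical measures -/

section MeasMetric

variable {M : Type*} [MetricSpace M] [MeasurableSpace M]

/-- The metric `𝔡` on Borel (probability) measures determined by a sequence of test
functions `Φ`. -/
noncomputable def measDist (Φ : ℕ → M → ℝ) (μ ν : Measure M) : ℝ :=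
  ∑' n : ℕ, (1 / 2 : ℝ) ^ (n + 1) * |(∫ x, Φ n x ∂μ) - ∫ x, Φ n x ∂ν|

/-- A sequence of test functions with `‖Φ n‖_∞ + Lip (Φ n) ≤ 1`, dense in `C(M,ℝ)`. -/
def GoodTestSeq (Φ : ℕ → M → ℝ) : Prop :=
  (∀ n : ℕ, ∃ C K : ℝ, 0 ≤ C ∧ 0 ≤ K ∧ C + K ≤ 1 ∧ (∀ x, |Φ n x| ≤ C) ∧
    ∀ x y, |Φ n x - Φ n y| ≤ K * dist x y) ∧
  ∀ g : M → ℝ, Continuous g → ∀ ε : ℝ, 0 < ε → ∃ n : ℕ, ∀ x, |g x - Φ n x| < ε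

/-- The `n`-th empirical measure of the point `x` for the map `f`. -/
noncomputable def empMeasure (f : M → M) (n : ℕ) (x : M) : Measure M :=
  (n : ℝ≥0∞)⁻¹ • ∑ j ∈ Finset.range n, Measure.dirac (f^[j] x)

/-- The topological support of a measure. -/
def measSupport (μ : Measure M) : Set M :=
  {x | ∀ U : Set M, IsOpen U → x ∈ U → 0 < μ U}

/-- A measure of maximal entropy of `f` on `Λ`. -/
def IsMaxEntropyMeasureOn (f : M → M) (Λ : Set M) (μ : Measure M) : Prop :=
  IsProbabilityMeasure μ ∧ MeasurePreserving f μ μ ∧ μ Λᶜ = 0 ∧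
    measEntropy f μ = topEntropyOn f Λ

end MeasMetric

/-! ### Flow shadowing and expansiveness -/

section FlowShadow

variable {M : Type*} [MetricSpace M]

/-- Bowen–Walters expansiveness for flows. -/
def FlowExpansive (φ : Flow ℝ M) : Prop :=
  ∀ ε : ℝ, 0 < ε → ∃ δ : ℝ, 0 < δ ∧ ∀ x y : M, ∀ s : ℝ → ℝ, Continuous s → s 0 = 0 →
    (∀ t : ℝ, dist (φ.toFun t x) (φ.toFun (s t) y) ≤ δ) →
    ∃ τ : ℝ, |τ| ≤ ε ∧ y = φ.toFun τ x

/-- The shadowing property for flows: every `(δ,1)`-pseudo-orbit is `ε`-traced,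
up to an orientation preserving reparametrization of time, by a true orbit. -/
def FlowShadowing (φ : Flow ℝ M) : Prop :=
  ∀ ε : ℝ, 0 < ε → ∃ δ : ℝ, 0 < δ ∧
    ∀ (x : ℤ → M) (T S : ℤ → ℝ), (∀ i : ℤ, 1 ≤ T i) →
      (∀ i : ℤ, dist (φ.toFun (T i) (x i)) (x (i + 1)) ≤ δ) →
      S 0 = 0 → (∀ i : ℤ, S (i + 1) = S i + T i) →
      ∃ (z : M) (h : ℝ → ℝ), StrictMono h ∧ Continuous h ∧ Function.Surjective h ∧
        ∀ i : ℤ, ∀ t : ℝ, S i ≤ t → t < S (i + 1) →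
          dist (φ.toFun (h t) z) (φ.toFun (t - S i) (x i)) ≤ ε

end FlowShadow


/-! ### Lift of a measure to a suspension flow -/

section Lift

variable {X : Type*} [MeasurableSpace X] {Y : Type*} [TopologicalSpace Y] [MeasurableSpace Y]

/-- The lift of a base measure `ν` to the suspension flow `φ` with roof `ρ`,
via the base embedding `e`: the normalized image of `ν ⊗ Leb` on the region
below the roof. -/
noncomputable def suspLift (φ : Flow ℝ Y) (e : X → Y) (ρ : X → ℝ) (ν : Measure X) :
    Measure Y :=
  (ENNReal.ofReal (∫ x, ρ x ∂ν))⁻¹ •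
    Measure.map (fun p : X × ℝ => φ.toFun p.2 (e p.1))
      ((ν.prod (volume : Measure ℝ)).restrict {p : X × ℝ | 0 ≤ p.2 ∧ p.2 < ρ p.1})

end Lift


end EF
open EF

/-! ### Shannon entropy of finite-valued maps -/

/-- A map into a finite set all of whose fibres are measurable. -/
def FMeas {Ω F : Type*} [MeasurableSpace Ω] (X : Ω → F) : Prop :=
  ∀ a, MeasurableSet (X ⁻¹' {a})

/-- Shannon entropy of the law of the finite-valued map `X` under `μ`. -/
noncomputable def shEnt {Ω F : Type*} [MeasurableSpace Ω] [Fintype F] (μ : Measure Ω)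
    (X : Ω → F) : ℝ :=
  ∑ a, Real.negMulLog (μ.real (X ⁻¹' {a}))

section Shannon

variable {Ω : Type*} [MeasurableSpace Ω]

theorem FMeas.preimage {F : Type*} [Finite F] {X : Ω → F} (hX : FMeas X) (s : Set F) :
    MeasurableSet (X ⁻¹' s) := by
  have : X ⁻¹' s = ⋃ a ∈ s, X ⁻¹' {a} := by ext; simp
  rw [this]
  exact MeasurableSet.biUnion (Set.to_countable s) fun a _ => hX a

theorem FMeas.comp {F G : Type*} [Finite F] {X : Ω → F} (hX : FMeas X) (g : F → G) :
    FMeas (fun ω => g (X ω)) := fun b => hX.preimage (g ⁻¹' {b})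

theorem FMeas.prodMk {F G : Type*} {X : Ω → F} {Y : Ω → G} (hX : FMeas X) (hY : FMeas Y) :
    FMeas (fun ω => (X ω, Y ω)) := by
  rintro ⟨a, b⟩
  have : (fun ω => (X ω, Y ω)) ⁻¹' {(a, b)} = X ⁻¹' {a} ∩ Y ⁻¹' {b} := by
    ext; simp
  rw [this]
  exact (hX a).inter (hY b)

theorem FMeas.pi {ι F : Type*} [Countable ι] {X : ι → Ω → F} (hX : ∀ i, FMeas (X i)) :
    FMeas (fun ω i => X i ω) := by
  intro a
  have : (fun ω i => X i ω) ⁻¹' {a} = ⋂ i, X i ⁻¹' {a i} := by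
    ext; simp [funext_iff]
  rw [this]
  exact MeasurableSet.iInter fun i => hX i _

theorem FMeas.comp_measurable {Ω' F : Type*} [MeasurableSpace Ω'] {X : Ω → F} (hX : FMeas X)
    {T : Ω' → Ω} (hT : Measurable T) : FMeas (fun ω => X (T ω)) := fun a => hT (hX a)

/-- Subadditivity of `x ↦ -x log x` on nonnegative reals. -/
theorem negMulLog_sum_le {ι : Type*} (s : Finset ι) (q : ι → ℝ) (hq : ∀ i, 0 ≤ q i) :
    Real.negMulLog (∑ i ∈ s, q i) ≤ ∑ i ∈ s, Real.negMulLog (q i) := by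
  unfold Real.negMulLog
  rw [neg_mul, Finset.sum_mul, ← Finset.sum_neg_distrib]
  refine Finset.sum_le_sum fun i hi => ?_
  rcases (hq i).eq_or_lt with h | h
  · simp [← h]
  · have := Real.log_le_log h (Finset.single_le_sum (fun j _ => hq j) hi)
    nlinarith

theorem shEnt_comp_measurePreserving (μ : Measure Ω) {F : Type*} [Fintype F] {X : Ω → F}
    (hX : FMeas X) {T : Ω → Ω} (hT : MeasurePreserving T μ μ) :
    shEnt μ (fun ω => X (T ω)) = shEnt μ X := by
  unfold shEnt
  refine Finset.sum_congr rfl fun a _ => ?_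
  congr 1
  exact hT.measureReal_preimage (hX a).nullMeasurableSet

variable (μ : Measure Ω) [IsProbabilityMeasure μ]

theorem shEnt_nonneg {F : Type*} [Fintype F] (X : Ω → F) : 0 ≤ shEnt μ X :=
  Finset.sum_nonneg fun _ _ => Real.negMulLog_nonneg measureReal_nonneg measureReal_le_one

theorem measureReal_preimage_eq_sum {F : Type*} [Fintype F] {X : Ω → F} (hX : FMeas X)
    (s : Finset F) : μ.real (X ⁻¹' s) = ∑ a ∈ s, μ.real (X ⁻¹' {a}) := by
  have : X ⁻¹' (s : Set F) = ⋃ a ∈ s, X ⁻¹' {a} := by ext; simp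
  rw [this, measureReal_biUnion_finset]
  · intro a _ b _ hab
    exact Disjoint.preimage X (by simpa using hab)
  · exact fun a _ => hX a

theorem shEnt_comp_le {F G : Type*} [Fintype F] [Fintype G] {X : Ω → F} (hX : FMeas X)
    (g : F → G) : shEnt μ (fun ω => g (X ω)) ≤ shEnt μ X := by
  classical
  unfold shEnt
  rw [← Finset.sum_fiberwise (s := Finset.univ) (g := g)
    (f := fun a => Real.negMulLog (μ.real (X ⁻¹' {a})))]
  refine Finset.sum_le_sum fun b _ => ?_
  have : (fun ω => g (X ω)) ⁻¹' {b} = X ⁻¹' ((Finset.univ.filter fun a => g a = b : Finset F)) := by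
    ext; simp
  rw [this, measureReal_preimage_eq_sum μ hX]
  exact negMulLog_sum_le _ _ fun _ => measureReal_nonneg

theorem shEnt_le_of_factor {F G : Type*} [Fintype F] [Fintype G] {X : Ω → F} (hX : FMeas X)
    {Y : Ω → G} (h : ∀ ω ω', X ω = X ω' → Y ω = Y ω') : shEnt μ Y ≤ shEnt μ X := by
  classical
  obtain ⟨ω₀⟩ : Nonempty Ω := μ.nonempty_of_neZero
  let g : F → G := fun a => if h : ∃ ω, X ω = a then Y h.choose else Y ω₀
  have : Y = fun ω => g (X ω) := by
    ext ω
    have hex : ∃ ω', X ω' = X ω := ⟨ω, rfl⟩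
    simp only [g, dif_pos hex]
    exact h _ _ hex.choose_spec.symm
  rw [this]
  exact shEnt_comp_le μ hX g

/-- Strong subadditivity, as an inequality between finite sums. -/
theorem ssa_sum {F G K : Type*} [Fintype F] [Fintype G] [Fintype K] (p : F → G → K → ℝ)
    (hp : ∀ x y z, 0 ≤ p x y z) :
    (∑ x, ∑ y, ∑ z, Real.negMulLog (p x y z)) + ∑ y, Real.negMulLog (∑ x, ∑ z, p x y z) ≤
      (∑ x, ∑ y, Real.negMulLog (∑ z, p x y z)) +
        ∑ y, ∑ z, Real.negMulLog (∑ x, p x y z) := by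
  set a : F → G → ℝ := fun x y => ∑ z, p x y z with ha
  set b : G → K → ℝ := fun y z => ∑ x, p x y z with hb
  set c : G → ℝ := fun y => ∑ x, ∑ z, p x y z with hc
  have ha' : ∀ x y z, p x y z ≤ a x y := fun x y z =>
    Finset.single_le_sum (f := fun z => p x y z) (fun j _ => hp x y j) (Finset.mem_univ z)
  have hb' : ∀ x y z, p x y z ≤ b y z := fun x y z =>
    Finset.single_le_sum (f := fun x => p x y z) (fun j _ => hp j y z) (Finset.mem_univ x)
  have ha0 : ∀ x y, 0 ≤ a x y := fun x y => Finset.sum_nonneg fun z _ => hp x y z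
  have hb0 : ∀ y z, 0 ≤ b y z := fun y z => Finset.sum_nonneg fun x _ => hp x y z
  have hac : ∀ x y, a x y ≤ c y := fun x y =>
    Finset.single_le_sum (f := fun x => a x y) (fun j _ => ha0 j y) (Finset.mem_univ x)
  have hcb : ∀ y, c y = ∑ z, b y z := fun y => Finset.sum_comm
  have key : ∀ x y z, p x y z * (Real.log (a x y) + Real.log (b y z) - Real.log (p x y z)
      - Real.log (c y)) ≤ a x y * b y z / c y - p x y z := by
    intro x y z
    rcases (hp x y z).eq_or_lt with h | h
    · rw [← h]
      simp only [zero_mul, sub_zero]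
      exact div_nonneg (mul_nonneg (ha0 x y) (hb0 y z)) ((ha0 x y).trans (hac x y))
    · have h1 : 0 < a x y := h.trans_le (ha' x y z)
      have h2 : 0 < b y z := h.trans_le (hb' x y z)
      have h3 : 0 < c y := h1.trans_le (hac x y)
      have := Real.log_le_sub_one_of_pos
        (show 0 < a x y * b y z / (p x y z * c y) by positivity)
      rw [Real.log_div (by positivity) (by positivity), Real.log_mul h1.ne' h2.ne',
        Real.log_mul h.ne' h3.ne'] at this
      have h4 := mul_le_mul_of_nonneg_left this h.le
      have h5 : p x y z * (a x y * b y z / (p x y z * c y) - 1) =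
          a x y * b y z / c y - p x y z := by field_simp
      rw [h5] at h4
      refine le_trans (le_of_eq ?_) h4
      ring
  have hsum := Finset.sum_le_sum fun x (_ : x ∈ (Finset.univ : Finset F)) =>
    Finset.sum_le_sum fun y (_ : y ∈ (Finset.univ : Finset G)) =>
      Finset.sum_le_sum fun z (_ : z ∈ (Finset.univ : Finset K)) => key x y z
  have hrhs : ∑ x, ∑ y, ∑ z, (a x y * b y z / c y - p x y z) = 0 := by
    have : ∀ x y, ∑ z, (a x y * b y z / c y - p x y z) = 0 := by
      intro x y
      rw [Finset.sum_sub_distrib, ← Finset.sum_div, ← Finset.mul_sum, ← hcb]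
      rcases eq_or_ne (c y) 0 with h | h
      · have : a x y = 0 := le_antisymm (h ▸ hac x y) (ha0 x y)
        rw [h]; simp only [mul_zero, zero_div]
        change 0 - a x y = 0
        simp [this]
      · rw [mul_div_assoc, div_self h, mul_one]
        exact sub_self _
    simp [this]
  rw [hrhs] at hsum
  have e1 : ∀ x y, Real.negMulLog (a x y) = - ∑ z, p x y z * Real.log (a x y) := by
    intro x y
    rw [← Finset.sum_mul, Real.negMulLog, neg_mul]
  have e2 : ∑ y, ∑ z, Real.negMulLog (b y z) =
      - ∑ x, ∑ y, ∑ z, p x y z * Real.log (b y z) := by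
    have : ∀ y z, Real.negMulLog (b y z) = - ∑ x, p x y z * Real.log (b y z) := by
      intro y z
      rw [← Finset.sum_mul, Real.negMulLog, neg_mul]
    simp only [this, Finset.sum_neg_distrib]
    rw [Finset.sum_comm (s := (Finset.univ : Finset F))]
    congr 1
    exact Finset.sum_congr rfl fun y _ => Finset.sum_comm
  have e3 : ∑ y, Real.negMulLog (c y) =
      - ∑ x, ∑ y, ∑ z, p x y z * Real.log (c y) := by
    have : ∀ y, Real.negMulLog (c y) = - ∑ x, ∑ z, p x y z * Real.log (c y) := by
      intro y
      simp only [← Finset.sum_mul]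
      rw [Real.negMulLog, neg_mul]
    simp only [this, Finset.sum_neg_distrib]
    rw [Finset.sum_comm (s := (Finset.univ : Finset F))]
  have e4 : ∑ x, ∑ y, ∑ z, Real.negMulLog (p x y z) =
      - ∑ x, ∑ y, ∑ z, p x y z * Real.log (p x y z) := by
    simp only [Real.negMulLog, neg_mul, Finset.sum_neg_distrib]
  have e1' : ∑ x, ∑ y, Real.negMulLog (a x y) =
      - ∑ x, ∑ y, ∑ z, p x y z * Real.log (a x y) := by
    rw [Finset.sum_congr rfl fun x _ => Finset.sum_congr rfl fun y _ => e1 x y]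
    simp only [Finset.sum_neg_distrib]
  rw [e1', e2, e3, e4]
  simp only [mul_add, mul_sub, Finset.sum_add_distrib, Finset.sum_sub_distrib] at hsum
  linarith

theorem shEnt_ssa {F G K : Type*} [Fintype F] [Fintype G] [Fintype K]
    {X : Ω → F} {Y : Ω → G} {Z : Ω → K} (hX : FMeas X) (hY : FMeas Y) (hZ : FMeas Z) :
    shEnt μ (fun ω => (X ω, Y ω, Z ω)) + shEnt μ Y ≤
      shEnt μ (fun ω => (X ω, Y ω)) + shEnt μ (fun ω => (Y ω, Z ω)) := by
  classical
  have hXYZ : FMeas (fun ω => (X ω, Y ω, Z ω)) := hX.prodMk (hY.prodMk hZ)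
  have h := ssa_sum (fun x y z => μ.real ((fun ω => (X ω, Y ω, Z ω)) ⁻¹' {(x, y, z)}))
    (fun _ _ _ => measureReal_nonneg)
  have e1 : ∀ x y, ∑ z, μ.real ((fun ω => (X ω, Y ω, Z ω)) ⁻¹' {(x, y, z)}) =
      μ.real ((fun ω => (X ω, Y ω)) ⁻¹' {(x, y)}) := by
    intro x y
    have : (fun ω => (X ω, Y ω)) ⁻¹' {(x, y)} = (fun ω => (X ω, Y ω, Z ω)) ⁻¹'
        (((Finset.univ : Finset K).image fun z => (x, y, z) : Finset (F × G × K))) := by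
      ext; simp [eq_comm]
    rw [this, measureReal_preimage_eq_sum μ hXYZ,
      Finset.sum_image (by intro _ _ _ _ h; simpa using h)]
  have e2 : ∀ y z, ∑ x, μ.real ((fun ω => (X ω, Y ω, Z ω)) ⁻¹' {(x, y, z)}) =
      μ.real ((fun ω => (Y ω, Z ω)) ⁻¹' {(y, z)}) := by
    intro y z
    have : (fun ω => (Y ω, Z ω)) ⁻¹' {(y, z)} = (fun ω => (X ω, Y ω, Z ω)) ⁻¹'
        (((Finset.univ : Finset F).image fun x => (x, y, z) : Finset (F × G × K))) := by
      ext; simp [eq_comm]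
    rw [this, measureReal_preimage_eq_sum μ hXYZ,
      Finset.sum_image (by intro _ _ _ _ h; simpa using h)]
  have e3 : ∀ y, ∑ x, μ.real ((fun ω => (X ω, Y ω)) ⁻¹' {(x, y)}) = μ.real (Y ⁻¹' {y}) := by
    intro y
    have : Y ⁻¹' {y} = (fun ω => (X ω, Y ω)) ⁻¹'
        (((Finset.univ : Finset F).image fun x => (x, y) : Finset (F × G))) := by
      ext; simp [eq_comm]
    rw [this, measureReal_preimage_eq_sum μ (hX.prodMk hY),
      Finset.sum_image (by intro _ _ _ _ h; simpa using h)]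
  simp only [e1, e2, e3] at h
  simpa only [shEnt, Fintype.sum_prod_type] using h

/-- Conditioning on a finer process: the conditional entropy of the `n`-name of `X` given the
`n`-name of `Y` is at most `n` times the conditional entropy of `X` given `Y`. -/
theorem shEnt_names_le {F G : Type*} [Fintype F] [Fintype G] {X : Ω → F} {Y : Ω → G}
    (hX : FMeas X) (hY : FMeas Y) {T : Ω → Ω} (hT : MeasurePreserving T μ μ) (n : ℕ) :
    shEnt μ (fun ω => ((fun i : Fin n => X (T^[i] ω)), fun i : Fin n => Y (T^[i] ω))) ≤
      shEnt μ (fun ω (i : Fin n) => Y (T^[i] ω)) +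
        n * (shEnt μ (fun ω => (X ω, Y ω)) - shEnt μ Y) := by
  have mX : ∀ i : ℕ, FMeas (fun ω => X (T^[i] ω)) := fun i =>
    hX.comp_measurable (hT.measurable.iterate i)
  have mY : ∀ i : ℕ, FMeas (fun ω => Y (T^[i] ω)) := fun i =>
    hY.comp_measurable (hT.measurable.iterate i)
  induction n with
  | zero =>
    refine le_trans (shEnt_le_of_factor μ (X := fun ω (i : Fin 0) => Y (T^[i] ω))
      (FMeas.pi fun i => mY i) ?_) (by simp)
    intro ω ω' _
    exact Prod.ext (Subsingleton.elim _ _) (Subsingleton.elim _ _)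
  | succ n ih =>
    set U : Ω → (Fin n → F) := fun ω i => X (T^[i] ω) with hU
    set V : Ω → (Fin n → G) := fun ω i => Y (T^[i] ω) with hV
    set x : Ω → F := fun ω => X (T^[n] ω) with hx
    set y : Ω → G := fun ω => Y (T^[n] ω) with hy
    have mU : FMeas U := FMeas.pi fun i => mX i
    have mV : FMeas V := FMeas.pi fun i => mY i
    have mx : FMeas x := mX n
    have my : FMeas y := mY n
    have s1 := shEnt_ssa μ mU (mV.prodMk my) mx
    have s2 := shEnt_ssa μ mU mV my
    have s3 := shEnt_ssa μ mV my mx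
    have t1 : shEnt μ (fun ω => ((fun i : Fin (n+1) => X (T^[i] ω)),
        fun i : Fin (n+1) => Y (T^[i] ω))) ≤ shEnt μ (fun ω => (U ω, (V ω, y ω), x ω)) := by
      refine shEnt_le_of_factor μ (mU.prodMk ((mV.prodMk my).prodMk mx)) ?_
      intro ω ω' h
      simp only [Prod.mk.injEq] at h
      obtain ⟨h1, ⟨h2, h3⟩, h4⟩ := h
      refine Prod.ext (funext fun i => ?_) (funext fun i => ?_)
      · induction i using Fin.lastCases with
        | last => exact h4
        | cast i => exact congrFun h1 i
      · induction i using Fin.lastCases with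
        | last => exact h3
        | cast i => exact congrFun h2 i
    have t2 : shEnt μ (fun ω => (V ω, y ω)) ≤ shEnt μ (fun ω (i : Fin (n+1)) => Y (T^[i] ω)) := by
      refine shEnt_le_of_factor μ (X := fun ω (i : Fin (n + 1)) => Y (T^[i] ω))
        (FMeas.pi fun i => mY i) ?_
      intro ω ω' h
      refine Prod.ext (funext fun i => ?_) ?_
      · exact congrFun h i.castSucc
      · exact congrFun h (Fin.last n)
    have t3 : shEnt μ (fun ω => (y ω, x ω)) ≤ shEnt μ (fun ω => (X ω, Y ω)) := by
      rw [← shEnt_comp_measurePreserving μ (hX.prodMk hY) (hT.iterate n)]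
      refine shEnt_le_of_factor μ ((mX n).prodMk (mY n)) ?_
      intro ω ω' h
      simp only [Prod.mk.injEq] at h ⊢
      exact ⟨h.2, h.1⟩
    have t4 : shEnt μ y = shEnt μ Y := shEnt_comp_measurePreserving μ hY (hT.iterate n)
    have t5 : shEnt μ (fun ω => (U ω, V ω, y ω)) = shEnt μ (fun ω => (U ω, (V ω, y ω))) := rfl
    have t6 : shEnt μ (fun ω => ((V ω, y ω), x ω)) ≤ shEnt μ (fun ω => (V ω, y ω, x ω)) := by
      refine shEnt_le_of_factor μ (mV.prodMk (my.prodMk mx)) ?_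
      intro ω ω' h
      simp only [Prod.mk.injEq] at h ⊢
      tauto
    push_cast
    linarith

/-- If `X` and `G` rarely differ, the conditional entropy of `X` given `G` is small. -/
theorem exists_shEnt_cond_lt (F : Type*) [Fintype F] {ε : ℝ} (hε : 0 < ε) :
    ∃ δ > 0, ∀ X G : Ω → F, FMeas X → FMeas G → μ.real {ω | X ω ≠ G ω} < δ →
      shEnt μ (fun ω => (X ω, G ω)) - shEnt μ G < ε := by
  classical
  obtain ⟨ε', hε', hle⟩ : ∃ ε' > 0, ε' * (Fintype.card F * Fintype.card F : ℝ) < ε := by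
    refine ⟨ε / (Fintype.card F * Fintype.card F + 1), by positivity, ?_⟩
    rw [div_mul_eq_mul_div, div_lt_iff₀ (by positivity)]
    nlinarith
  have huc : UniformContinuousOn Real.negMulLog (Set.Icc 0 1) :=
    isCompact_Icc.uniformContinuousOn_of_continuous Real.continuous_negMulLog.continuousOn
  obtain ⟨δ, hδ, h⟩ := Metric.uniformContinuousOn_iff.1 huc ε' hε'
  refine ⟨δ, hδ, fun X G hX hG hXG => ?_⟩
  have hI : ∀ s : Set Ω, μ.real s ∈ Set.Icc (0 : ℝ) 1 := fun s =>
    ⟨measureReal_nonneg, measureReal_le_one⟩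
  have hG' : shEnt μ G = ∑ a, ∑ b, if a = b then Real.negMulLog (μ.real (G ⁻¹' {b})) else 0 := by
    simp [shEnt]
  have hterm : ∀ a b, Real.negMulLog (μ.real ((fun ω => (X ω, G ω)) ⁻¹' {(a, b)})) -
      (if a = b then Real.negMulLog (μ.real (G ⁻¹' {b})) else 0) ≤ ε' := by
    intro a b
    split_ifs with hab
    · subst hab
      have hsub : (fun ω => (X ω, G ω)) ⁻¹' {(a, a)} ⊆ G ⁻¹' {a} := by
        intro ω; simp
      have hle : μ.real (G ⁻¹' {a}) ≤ μ.real ((fun ω => (X ω, G ω)) ⁻¹' {(a, a)}) +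
          μ.real {ω | X ω ≠ G ω} := by
        refine le_trans (measureReal_mono ?_) (measureReal_union_le _ _)
        intro ω hω
        by_cases hx : X ω = G ω
        · left; simp only [mem_preimage, mem_singleton_iff] at hω; simp [hx, hω]
        · right; exact hx
      have := h _ (hI ((fun ω => (X ω, G ω)) ⁻¹' {(a, a)})) _ (hI (G ⁻¹' {a})) (by
        rw [Real.dist_eq, abs_sub_comm, abs_of_nonneg (sub_nonneg.2 (measureReal_mono hsub))]
        linarith)
      rw [Real.dist_eq] at this
      exact (le_abs_self _).trans this.le
    · have hsub : (fun ω => (X ω, G ω)) ⁻¹' {(a, b)} ⊆ {ω | X ω ≠ G ω} := by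
        intro ω hω
        simp only [mem_preimage, mem_singleton_iff, Prod.mk.injEq] at hω
        change X ω ≠ G ω
        rw [hω.1, hω.2]; exact hab
      have := h _ (hI ((fun ω => (X ω, G ω)) ⁻¹' {(a, b)})) 0 (by simp) (by
        rw [Real.dist_eq, sub_zero, abs_of_nonneg measureReal_nonneg]
        exact (measureReal_mono hsub).trans_lt hXG)
      rw [Real.dist_eq, Real.negMulLog_zero] at this
      exact (le_abs_self _).trans this.le
  calc shEnt μ (fun ω => (X ω, G ω)) - shEnt μ G
      = ∑ a, ∑ b, (Real.negMulLog (μ.real ((fun ω => (X ω, G ω)) ⁻¹' {(a, b)})) -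
      (if a = b then Real.negMulLog (μ.real (G ⁻¹' {b})) else 0)) := by
        rw [hG', shEnt, Fintype.sum_prod_type]
        simp only [Finset.sum_sub_distrib]
    _ ≤ ∑ a : F, ∑ b : F, ε' := Finset.sum_le_sum fun a _ => Finset.sum_le_sum fun b _ => hterm a b
    _ < ε := by
        simp only [Finset.sum_const, Finset.card_univ, nsmul_eq_mul]
        linarith

end Shannon

/-! ### Bernoulli shifts -/

section Bernoulli

variable {m : ℕ}

theorem fullShift_iterate (n : ℕ) (x : ℤ → Fin m) (i : ℤ) :
    (fullShift (Fin m))^[n] x i = x (i + n) := by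
  induction n generalizing x with
  | zero => simp
  | succ n ih =>
    rw [Function.iterate_succ_apply, ih]
    simp only [fullShift]
    congr 1
    push_cast
    ring

/-- The Bernoulli measure on bi-infinite sequences with marginal `p`. -/
noncomputable def bern (p : Measure (Fin m)) [IsProbabilityMeasure p] : Measure (ℤ → Fin m) :=
  Measure.infinitePi fun _ => p

/-- Shannon entropy of a probability measure on `Fin m`. -/
noncomputable def Hp (p : Measure (Fin m)) : ℝ := ∑ a, Real.negMulLog (p.real {a})

variable (p : Measure (Fin m)) [IsProbabilityMeasure p]

instance : IsProbabilityMeasure (bern p) := by unfold bern; infer_instance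

theorem Hp_nonneg : 0 ≤ Hp p :=
  Finset.sum_nonneg fun _ _ => Real.negMulLog_nonneg measureReal_nonneg measureReal_le_one

theorem measurePreserving_shift : MeasurePreserving (fullShift (Fin m)) (bern p) (bern p) := by
  refine ⟨measurable_pi_lambda _ fun i => measurable_pi_apply _, ?_⟩
  exact Measure.map_infinitePi_infinitePi_of_inj (P := fun _ : ℤ => p)
    (f := fun i : ℤ => i + 1) (add_left_injective 1)

/-- The block of length `n` starting at coordinate `a`. -/
def block (a : ℤ) (n : ℕ) (x : ℤ → Fin m) : Fin n → Fin m := fun i => x (a + (i : ℕ))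

theorem fmeas_block (a : ℤ) (n : ℕ) : FMeas (block (m := m) a n) :=
  FMeas.pi fun i b => measurable_pi_apply (a + (i : ℕ)) (measurableSet_singleton b)

theorem bern_block (a : ℤ) (n : ℕ) (w : Fin n → Fin m) :
    (bern p).real (block a n ⁻¹' {w}) = ∏ i, p.real {w i} := by
  have h := Measure.map_infinitePi_infinitePi_of_inj (P := fun _ : ℤ => p)
    (f := fun i : Fin n => a + (i : ℕ)) (fun i j hij => by
      ext
      simpa using hij)
  have h2 : (Measure.map (block a n) (bern p)) {w} = ∏ i, p {w i} := by
    have : (Measure.map (block a n) (bern p)) =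
      Measure.infinitePi (fun _ : Fin n => p) := h
    rw [this, Measure.infinitePi_singleton_of_fintype]
  have hm : Measurable (block (m := m) a n) := measurable_pi_lambda _ fun i => measurable_pi_apply _
  rw [Measure.map_apply hm (measurableSet_singleton w)] at h2
  rw [measureReal_def, h2, ENNReal.toReal_prod]
  rfl

theorem sum_negMulLog_prod (n : ℕ) (q : Fin m → ℝ) (hq : ∑ a, q a = 1) :
    ∑ w : Fin n → Fin m, Real.negMulLog (∏ i, q (w i)) = n * ∑ a, Real.negMulLog (q a) := by
  induction n with
  | zero => simp
  | succ n ih =>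
    rw [← (Fin.consEquiv fun _ => Fin m).sum_comp, Fintype.sum_prod_type]
    have hone : ∑ w : Fin n → Fin m, ∏ i, q (w i) = 1 := by
      have h := Finset.prod_univ_sum (fun _ : Fin n => (Finset.univ : Finset (Fin m)))
        (fun _ a => q a)
      rw [Fintype.piFinset_univ] at h
      rw [← h]
      simp [hq]
    simp only [Fin.consEquiv_apply, Fin.prod_univ_succ, Fin.cons_zero, Fin.cons_succ,
      Real.negMulLog_mul, Finset.sum_add_distrib]
    simp only [← Finset.sum_mul, ← Finset.mul_sum, ih, hone, hq]
    push_cast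
    ring

theorem shEnt_block (a : ℤ) (n : ℕ) : shEnt (bern p) (block a n) = n * Hp p := by
  unfold shEnt Hp
  simp only [bern_block]
  refine sum_negMulLog_prod n (fun a => p.real {a}) ?_
  rw [sum_measureReal_singleton]
  simp

/-- Every measurable set of sequences is approximated by sets depending on finitely many
coordinates. -/
theorem exists_cylinder_approx {A : Set (ℤ → Fin m)} (hA : MeasurableSet A) {ε : ℝ}
    (hε : 0 < ε) : ∃ (k : ℕ) (C : Set (Fin (2 * k + 1) → Fin m)),
      (bern p).real (symmDiff (block (-(k : ℤ)) (2 * k + 1) ⁻¹' C) A) < ε := by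
  obtain ⟨t, ht, htA⟩ := exists_measure_symmDiff_lt_of_generateFrom_isSetRing (μ := bern p)
    (isSetRing_measurableCylinders (α := fun _ : ℤ => Fin m))
    ⟨{univ}, by simp, by
      simpa using univ_mem_measurableCylinders (fun _ : ℤ => Fin m), by simp⟩
    generateFrom_measurableCylinders.symm hA (ENNReal.ofReal_pos.2 hε)
  obtain ⟨s, S, hS, rfl⟩ := (mem_measurableCylinders _).1 ht
  obtain ⟨k, hk⟩ : ∃ k : ℕ, ∀ i ∈ s, -(k : ℤ) ≤ i ∧ i ≤ k := by
    refine ⟨s.sup Int.natAbs, fun i hi => ?_⟩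
    have := Finset.le_sup (f := Int.natAbs) hi
    omega
  refine ⟨k, block (-(k : ℤ)) (2 * k + 1) '' cylinder s S, ?_⟩
  have : block (-(k : ℤ)) (2 * k + 1) ⁻¹' (block (-(k : ℤ)) (2 * k + 1) '' cylinder s S) =
      cylinder s S := by
    refine subset_antisymm ?_ (subset_preimage_image _ _)
    rintro x ⟨y, hy, hxy⟩
    rw [mem_cylinder] at hy ⊢
    convert hy using 1
    ext1 i
    obtain ⟨h1, h2⟩ := hk i i.2
    have := congrFun hxy ⟨(i + k : ℤ).toNat, by omega⟩
    simp only [block] at this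
    have e : (-(k : ℤ) + ((i + k : ℤ).toNat : ℤ)) = i := by omega
    rw [e] at this
    exact this.symm
  rw [this, measureReal_def]
  exact (ENNReal.lt_ofReal_iff_toReal_lt (by finiteness)).1 htA

/-- Blocks over disjoint windows are independent. -/
theorem bern_indep (k : ℕ) (C : Set (Fin (2 * k + 1) → Fin m)) :
    (bern p).real (block (-(k : ℤ)) (2 * k + 1) ⁻¹' C ∩
      (fullShift (Fin m))^[2 * k + 1] ⁻¹' (block (-(k : ℤ)) (2 * k + 1) ⁻¹' C)) =
      (bern p).real (block (-(k : ℤ)) (2 * k + 1) ⁻¹' C) ^ 2 := by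
  classical
  have hI : ProbabilityTheory.iIndepFun (fun (i : ℤ) (x : ℤ → Fin m) => x i) (bern p) :=
    ProbabilityTheory.iIndepFun_infinitePi (P := fun _ : ℤ => p) (X := fun _ x => x)
      (fun _ => measurable_id)
  have h := hI.indepFun_finset (Finset.Icc (-(k : ℤ)) k) (Finset.Icc ((k : ℤ) + 1) (3 * k + 1))
    (by
      rw [Finset.disjoint_left]
      intro i hi hj
      simp only [Finset.mem_Icc] at hi hj
      omega) (fun i => measurable_pi_apply i)
  let g₁ : (Finset.Icc (-(k : ℤ)) k → Fin m) → (Fin (2 * k + 1) → Fin m) :=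
    fun y i => y ⟨-(k : ℤ) + (i : ℕ), by rw [Finset.mem_Icc]; omega⟩
  let g₂ : (Finset.Icc ((k : ℤ) + 1) (3 * k + 1) → Fin m) → (Fin (2 * k + 1) → Fin m) :=
    fun y i => y ⟨(k : ℤ) + 1 + (i : ℕ), by rw [Finset.mem_Icc]; omega⟩
  have hg₁ : Measurable g₁ := measurable_of_finite _
  have hg₂ : Measurable g₂ := measurable_of_finite _
  have h2 := (h.comp hg₁ hg₂).measure_inter_preimage_eq_mul C C (Set.toFinite C).measurableSet
    (Set.toFinite C).measurableSet
  have e1 : (g₁ ∘ fun (x : ℤ → Fin m) (i : Finset.Icc (-(k : ℤ)) k) => x i) =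
      block (-(k : ℤ)) (2 * k + 1) := rfl
  have e2 : (g₂ ∘ fun (x : ℤ → Fin m) (i : Finset.Icc ((k : ℤ) + 1) (3 * k + 1)) => x i) =
      block (-(k : ℤ)) (2 * k + 1) ∘ (fullShift (Fin m))^[2 * k + 1] := by
    ext x i
    simp only [Function.comp, block, fullShift_iterate, g₂]
    congr 2
    push_cast
    ring
  rw [e1, e2, preimage_comp] at h2
  rw [measureReal_def, h2, ENNReal.toReal_mul, ← measureReal_def, ← measureReal_def,
    ((measurePreserving_shift p).iterate (2 * k + 1)).measureReal_preimage
      ((fmeas_block _ _).preimage C).nullMeasurableSet, sq]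

theorem bern_zero_one {A : Set (ℤ → Fin m)} (hA : MeasurableSet A)
    (hinv : fullShift (Fin m) ⁻¹' A = A) : (bern p).real A = 0 ∨ (bern p).real A = 1 := by
  set μ := bern p with hμ
  suffices h : μ.real A - μ.real A ^ 2 = 0 by
    have : μ.real A * (1 - μ.real A) = 0 := by linarith
    rcases mul_eq_zero.1 this with h | h
    · exact Or.inl h
    · exact Or.inr (by linarith)
  have habs : ∀ B D : Set (ℤ → Fin m), |μ.real B - μ.real D| ≤ μ.real (symmDiff B D) := by
    intro B D
    rw [abs_le]
    have h1 : μ.real D ≤ μ.real B + μ.real (symmDiff B D) := by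
      refine le_trans (measureReal_mono ?_) (measureReal_union_le _ _)
      intro x hx
      by_cases hB : x ∈ B
      · exact Or.inl hB
      · exact Or.inr (Or.inr ⟨hx, hB⟩)
    have h2 : μ.real B ≤ μ.real D + μ.real (symmDiff B D) := by
      refine le_trans (measureReal_mono ?_) (measureReal_union_le _ _)
      intro x hx
      by_cases hB : x ∈ D
      · exact Or.inl hB
      · exact Or.inr (Or.inl ⟨hx, hB⟩)
    constructor <;> linarith
  rw [← abs_eq_zero]
  refine le_antisymm (le_of_forall_pos_lt_add fun ε hε => ?_) (abs_nonneg _)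
  obtain ⟨k, C, hC⟩ := exists_cylinder_approx p hA (show 0 < ε / 4 by positivity)
  set B := block (-(k : ℤ)) (2 * k + 1) ⁻¹' C with hB
  set T := (fullShift (Fin m))^[2 * k + 1] with hT
  have hind : μ.real (B ∩ T ⁻¹' B) = μ.real B ^ 2 := bern_indep p k C
  have hTA : T ⁻¹' A = A := by
    rw [hT, Set.preimage_iterate_eq]
    exact Function.iterate_fixed hinv _
  have hmB : MeasurableSet B := (fmeas_block _ _).preimage C
  have hTB : μ.real (T ⁻¹' (symmDiff B A)) = μ.real (symmDiff B A) :=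
    ((measurePreserving_shift p).iterate (2 * k + 1)).measureReal_preimage
      (hmB.symmDiff hA).nullMeasurableSet
  have h1 := habs B A
  have h2 : |μ.real (B ∩ T ⁻¹' B) - μ.real A| ≤ 2 * μ.real (symmDiff B A) := by
    refine (habs _ _).trans ?_
    have hsub : symmDiff (B ∩ T ⁻¹' B) A ⊆ symmDiff B A ∪ T ⁻¹' (symmDiff B A) := by
      intro x hx
      have hxT : T x ∈ A ↔ x ∈ A := by
        change x ∈ T ⁻¹' A ↔ _
        rw [hTA]
      simp only [Set.mem_symmDiff, mem_inter_iff, mem_union, mem_preimage] at hx ⊢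
      tauto
    have := (measureReal_mono hsub).trans (measureReal_union_le (μ := μ) _ _)
    linarith
  rw [hind] at h2
  have hA1 : μ.real A ≤ 1 := measureReal_le_one
  have hA0 : 0 ≤ μ.real A := measureReal_nonneg
  have hB1 : μ.real B ≤ 1 := measureReal_le_one
  have hB0 : 0 ≤ μ.real B := measureReal_nonneg
  have h3 : |μ.real B ^ 2 - μ.real A ^ 2| ≤ 2 * |μ.real B - μ.real A| := by
    rw [sq_sub_sq, abs_mul]
    refine mul_le_mul_of_nonneg_right ?_ (abs_nonneg _)
    rw [abs_of_nonneg (by linarith)]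
    linarith
  calc |μ.real A - μ.real A ^ 2| = |(μ.real B ^ 2 - μ.real A ^ 2) - (μ.real B ^ 2 - μ.real A)| := by
        congr 1; ring
    _ ≤ |μ.real B ^ 2 - μ.real A ^ 2| + |μ.real B ^ 2 - μ.real A| := abs_sub _ _
    _ < 0 + ε := by linarith

/-- Every finite-valued measurable map is close to one depending on finitely many coordinates. -/
theorem exists_block_approx {F : Type*} [Fintype F] {Z : (ℤ → Fin m) → F} (hZ : FMeas Z)
    {δ : ℝ} (hδ : 0 < δ) : ∃ (k : ℕ) (g : (Fin (2 * k + 1) → Fin m) → F),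
      (bern p).real {x | Z x ≠ g (block (-(k : ℤ)) (2 * k + 1) x)} < δ := by
  classical
  have hcard : (0 : ℝ) < Fintype.card F + 1 := by positivity
  choose k C hC using fun a => exists_cylinder_approx p (hZ a)
    (show 0 < δ / (Fintype.card F + 1) by positivity)
  obtain ⟨x₀⟩ : Nonempty (ℤ → Fin m) := (bern p).nonempty_of_neZero
  set K := Finset.univ.sup k with hK
  -- the cylinder attached to `a`, seen as a condition on the block over the larger window
  let D : F → Set (Fin (2 * K + 1) → Fin m) := fun a =>
    block (-(K : ℤ)) (2 * K + 1) '' (block (-(k a : ℤ)) (2 * k a + 1) ⁻¹' C a)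
  have hD : ∀ a x, block (-(K : ℤ)) (2 * K + 1) x ∈ D a ↔
      block (-(k a : ℤ)) (2 * k a + 1) x ∈ C a := by
    intro a x
    refine ⟨?_, fun h => ⟨x, h, rfl⟩⟩
    rintro ⟨y, hy, hyx⟩
    have hka : k a ≤ K := Finset.le_sup (Finset.mem_univ a)
    convert mem_preimage.1 hy using 1
    ext1 i
    have := congrFun hyx ⟨K - k a + i, by omega⟩
    simp only [block] at this ⊢
    have e : (-(K : ℤ) + ((K - k a + i : ℕ) : ℤ)) = -(k a : ℤ) + (i : ℕ) := by omega
    rw [e] at this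
    exact this.symm
  let g : (Fin (2 * K + 1) → Fin m) → F := fun w => if h : ∃ a, w ∈ D a then h.choose else Z x₀
  refine ⟨K, g, ?_⟩
  have hsub : {x | Z x ≠ g (block (-(K : ℤ)) (2 * K + 1) x)} ⊆
      ⋃ a ∈ (Finset.univ : Finset F),
        symmDiff (block (-(k a : ℤ)) (2 * k a + 1) ⁻¹' C a) (Z ⁻¹' {a}) := by
    intro x hx
    by_contra hcon
    apply hx
    have hiff : ∀ a, block (-(K : ℤ)) (2 * K + 1) x ∈ D a ↔ Z x = a := by
      intro a
      rw [hD]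
      simp only [Finset.mem_univ, iUnion_true, mem_iUnion, not_exists, Set.mem_symmDiff,
        mem_preimage, mem_singleton_iff] at hcon
      have := hcon a
      tauto
    have hex : ∃ a, block (-(K : ℤ)) (2 * K + 1) x ∈ D a := ⟨Z x, (hiff _).2 rfl⟩
    simp only [g, dif_pos hex]
    exact (hiff _).1 hex.choose_spec
  calc (bern p).real _ ≤ _ := measureReal_mono hsub (measure_ne_top _ _)
    _ ≤ ∑ a : F, (bern p).real (symmDiff (block (-(k a : ℤ)) (2 * k a + 1) ⁻¹' C a) (Z ⁻¹' {a})) :=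
        measureReal_biUnion_finset_le _ _
    _ ≤ ∑ a : F, δ / (Fintype.card F + 1) := Finset.sum_le_sum fun a _ => (hC a).le
    _ < δ := by
        rw [Finset.sum_const, Finset.card_univ, nsmul_eq_mul, mul_div_assoc', div_lt_iff₀ hcard]
        nlinarith

/-- Upper half of the generator theorem for Bernoulli shifts: no finite-valued measurable map
produces more entropy per unit time than the coordinate map. -/
theorem shEnt_bern_names_le {F : Type*} [Fintype F] {Z : (ℤ → Fin m) → F} (hZ : FMeas Z)
    {ε : ℝ} (hε : 0 < ε) : ∃ C : ℝ, ∀ n : ℕ,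
      shEnt (bern p) (fun x (i : Fin n) => Z ((fullShift (Fin m))^[i] x)) ≤
        C + n * (Hp p + ε) := by
  classical
  obtain ⟨δ, hδ, hlt⟩ := exists_shEnt_cond_lt (bern p) F hε
  obtain ⟨k, g, hg⟩ := exists_block_approx p hZ hδ
  set W : (ℤ → Fin m) → (Fin (2 * k + 1) → Fin m) := block (-(k : ℤ)) (2 * k + 1) with hW
  have mW : FMeas W := fmeas_block _ _
  have mg : FMeas (fun x => g (W x)) := mW.comp g
  refine ⟨2 * k * Hp p, fun n => ?_⟩
  have hT := measurePreserving_shift p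
  have h1 := shEnt_names_le (bern p) hZ mW hT n
  have h2 := hlt Z (fun x => g (W x)) hZ mg hg
  have h3 := shEnt_ssa (bern p) hZ mg mW
  have h4 : shEnt (bern p) (fun x => (Z x, W x)) ≤
      shEnt (bern p) (fun x => (Z x, g (W x), W x)) :=
    shEnt_comp_le (bern p) (hZ.prodMk (mg.prodMk mW)) (fun q => (q.1, q.2.2))
  have h5 : shEnt (bern p) (fun x => (g (W x), W x)) ≤ shEnt (bern p) W :=
    shEnt_comp_le (bern p) mW (fun w => (g w, w))
  have h6 : shEnt (bern p) (fun x (i : Fin n) => Z ((fullShift (Fin m))^[i] x)) ≤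
      shEnt (bern p) (fun x => ((fun i : Fin n => Z ((fullShift (Fin m))^[i] x)),
        fun i : Fin n => W ((fullShift (Fin m))^[i] x))) := by
    refine shEnt_comp_le (bern p) (FMeas.prodMk (FMeas.pi fun i => ?_) (FMeas.pi fun i => ?_))
      Prod.fst
    · exact hZ.comp_measurable (hT.measurable.iterate i)
    · exact mW.comp_measurable (hT.measurable.iterate i)
  have h7 : shEnt (bern p) (fun x (i : Fin n) => W ((fullShift (Fin m))^[i] x)) ≤
      shEnt (bern p) (block (m := m) (-(k : ℤ)) (n + 2 * k)) := by
    refine shEnt_le_of_factor (bern p) (fmeas_block _ _) ?_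
    intro x y hxy
    ext1 i
    ext1 j
    have := congrFun hxy ⟨i + j, by omega⟩
    simp only [block] at this
    simp only [hW, block, fullShift_iterate]
    have e : (-(k : ℤ) + ((i + j : ℕ) : ℤ)) = -(k : ℤ) + (j : ℕ) + (i : ℕ) := by push_cast; ring
    rw [e] at this
    exact this
  rw [shEnt_block] at h7
  push_cast at h7
  have h8 : (n : ℝ) * (shEnt (bern p) (fun x => (Z x, W x)) - shEnt (bern p) W) ≤ n * ε :=
    mul_le_mul_of_nonneg_left (by linarith) (Nat.cast_nonneg n)
  linarith

end Bernoulli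

/-! ### Entropy produced by loops at a symbol -/

section Loops

variable {M : Type*} [MetricSpace M]

/-- A finite set contains a maximal `(t,η)`-separated subset, which is then `(t,η)`-spanning. -/
theorem exists_sep_span (f : M → M) (t : ℕ) (η : ℝ) (Q : Finset M) :
    ∃ C ⊆ Q, IsDynSep f t η (C : Set M) ∧
      ∀ x ∈ Q, ∃ y ∈ C, ∀ j ≤ t, dist (f^[j] x) (f^[j] y) ≤ η ∨ x = y := by
  classical
  have hne : (Q.powerset.filter fun C : Finset M => IsDynSep f t η (C : Set M)).Nonempty :=
    ⟨∅, Finset.mem_filter.2 ⟨by simp, by simp [IsDynSep]⟩⟩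
  obtain ⟨C, hC, hmax⟩ := Finset.exists_max_image _ Finset.card hne
  rw [Finset.mem_filter, Finset.mem_powerset] at hC
  refine ⟨C, hC.1, hC.2, fun x hx => ?_⟩
  by_contra hcon
  push Not at hcon
  have hxC : x ∉ C := fun h => by
    obtain ⟨j, _, _, h3⟩ := hcon x h
    exact h3 rfl
  have hsep : IsDynSep f t η ((insert x C : Finset M) : Set M) := by
    unfold IsDynSep
    rw [Finset.coe_insert]
    refine hC.2.insert fun y hy _ => ?_
    obtain ⟨j, h1, h2, _⟩ := hcon y hy
    exact ⟨⟨j, h1, h2⟩, ⟨j, h1, by rwa [dist_comm]⟩⟩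
  have := hmax (insert x C) (by
    rw [Finset.mem_filter, Finset.mem_powerset]
    exact ⟨Finset.insert_subset hx hC.1, hsep⟩)
  rw [Finset.card_insert_of_notMem hxC] at this
  omega

/-- If the loops at every symbol grow at rate at most `c`, then the separated sets of orbits
confined to the symbols of `S` grow at rate at most `c`, up to a polynomial factor. Orbits are
sorted by their first symbol `a` and the last visit to `a`: before that visit they
form a loop, after it they live on the smaller alphabet `S \ {a}`. -/
theorem card_le_of_loops {V : Type*} [Fintype V] (f : M → M) (lab : M → V) {ε c : ℝ}
    (hε : 0 < ε) (hc : 0 ≤ c)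
    (hL : ∀ (a : V) (t : ℕ) (Q : Finset M), (∀ x ∈ Q, lab x = a ∧ lab (f^[t] x) = a) →
      IsDynSep f t (ε / 2) (Q : Set M) → (Q.card : ℝ) ≤ Real.exp (c * t)) (k : ℕ) :
    ∀ (S : Finset V), S.card = k → ∀ (n : ℕ) (Q : Finset M),
      (∀ x ∈ Q, ∀ j ≤ n, lab (f^[j] x) ∈ S) → IsDynSep f n ε (Q : Set M) →
      (Q.card : ℝ) ≤ (Fintype.card V * (n + 1) : ℝ) ^ k * Real.exp (c * n) := by
  classical
  induction k with
  | zero =>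
    intro S hS n Q hQ _
    have : Q = ∅ := by
      rw [Finset.eq_empty_iff_forall_notMem]
      intro x hx
      have := hQ x hx 0 (Nat.zero_le _)
      rw [Finset.card_eq_zero.1 hS] at this
      simp at this
    rw [this]
    simp only [Finset.card_empty, Nat.cast_zero]
    positivity
  | succ k ih =>
    intro S hS n Q hQ hsep
    let Qa : V × ℕ → Finset M := fun q => Q.filter fun x =>
      lab x = q.1 ∧ lab (f^[q.2] x) = q.1 ∧ ∀ j, q.2 < j → j ≤ n → lab (f^[j] x) ≠ q.1
    have hcover : Q ⊆ (Finset.univ ×ˢ Finset.range (n + 1)).biUnion Qa := by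
      intro x hx
      have hne : ((Finset.range (n + 1)).filter fun j => lab (f^[j] x) = lab x).Nonempty :=
        ⟨0, by simp⟩
      obtain ⟨t, ht, hmax⟩ := Finset.exists_max_image _ id hne
      rw [Finset.mem_filter, Finset.mem_range] at ht
      rw [Finset.mem_biUnion]
      refine ⟨(lab x, t), by simpa using ht.1, ?_⟩
      rw [Finset.mem_filter]
      refine ⟨hx, rfl, ht.2, fun j hj hjn h => ?_⟩
      have := hmax j (by
        rw [Finset.mem_filter, Finset.mem_range]
        exact ⟨by omega, h⟩)
      simp only [id] at this
      omega
    have key : ∀ q ∈ (Finset.univ : Finset V) ×ˢ Finset.range (n + 1),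
        ((Qa q).card : ℝ) ≤ (Fintype.card V * (n + 1) : ℝ) ^ k * Real.exp (c * n) := by
      rintro ⟨a, t⟩ hq
      have htn : t ≤ n := by
        simp only [Finset.mem_product, Finset.mem_range] at hq
        omega
      have hV : (1 : ℝ) ≤ Fintype.card V := by
        have : 0 < Fintype.card V := Fintype.card_pos_iff.2 ⟨a⟩
        exact_mod_cast this
      have hbase : (1 : ℝ) ≤ Fintype.card V * (n + 1) := by
        have : (0 : ℝ) ≤ n := Nat.cast_nonneg n
        nlinarith
      by_cases haS : a ∈ S
      swap
      · have : Qa (a, t) = ∅ := by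
          rw [Finset.eq_empty_iff_forall_notMem]
          intro x hx
          rw [Finset.mem_filter] at hx
          have := hQ x hx.1 0 (Nat.zero_le _)
          simp only [Function.iterate_zero, id] at this
          rw [hx.2.1] at this
          exact haS this
        rw [this]
        simp only [Finset.card_empty, Nat.cast_zero]
        positivity
      obtain ⟨C, hCQ, hCsep, hCspan⟩ := exists_sep_span f t (ε / 2) (Qa (a, t))
      have hCcard : (C.card : ℝ) ≤ Real.exp (c * t) := by
        refine hL a t C (fun x hx => ?_) hCsep
        have := hCQ hx
        rw [Finset.mem_filter] at this
        exact ⟨this.2.1, this.2.2.1⟩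
      choose! g hgC hg using hCspan
      have hclose : ∀ x ∈ Qa (a, t), ∀ y ∈ Qa (a, t), g x = g y → ∀ j ≤ t,
          dist (f^[j] x) (f^[j] y) ≤ ε := by
        intro x hx y hy hxy j hj
        have h1 : dist (f^[j] x) (f^[j] (g x)) ≤ ε / 2 := by
          rcases hg x hx j hj with h | h
          · exact h
          · rw [← h, dist_self]; positivity
        have h2 : dist (f^[j] y) (f^[j] (g x)) ≤ ε / 2 := by
          rw [hxy]
          rcases hg y hy j hj with h | h
          · exact h
          · rw [← h, dist_self]; positivity
        linarith [dist_triangle_right (f^[j] x) (f^[j] y) (f^[j] (g x))]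
      -- two points with the same centre are separated only after their last visit to `a`
      have hlate : ∀ x ∈ Qa (a, t), ∀ y ∈ Qa (a, t), g x = g y → x ≠ y →
          ∃ j, t + 1 + j ≤ n ∧ ε < dist (f^[j] (f^[t + 1] x)) (f^[j] (f^[t + 1] y)) := by
        intro x hx y hy hxy hne
        obtain ⟨j, hjn, hj⟩ := hsep (Finset.mem_filter.1 hx).1 (Finset.mem_filter.1 hy).1 hne
        by_cases hjt : j ≤ t
        · exact absurd (hclose x hx y hy hxy j hjt) (not_le.2 hj)
        · refine ⟨j - (t + 1), by omega, ?_⟩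
          rw [← Function.iterate_add_apply, ← Function.iterate_add_apply,
            Nat.sub_add_cancel (by omega)]
          exact hj
      have hfib : ∀ y ∈ C, (((Qa (a, t)).filter fun x => g x = y).card : ℝ) ≤
          (Fintype.card V * (n + 1) : ℝ) ^ k * Real.exp (c * (n - t)) := by
        intro y _
        have hE : (1 : ℝ) ≤ Real.exp (c * (n - t)) := by
          rw [Real.one_le_exp_iff]
          have : (t : ℝ) ≤ n := by exact_mod_cast htn
          exact mul_nonneg hc (by linarith)
        by_cases hone : ((Qa (a, t)).filter fun x => g x = y).card ≤ 1
        · calc (((Qa (a, t)).filter fun x => g x = y).card : ℝ) ≤ 1 := by exact_mod_cast hone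
            _ ≤ _ := one_le_mul_of_one_le_of_one_le (one_le_pow₀ hbase) hE
        have hmem : ∀ x ∈ (Qa (a, t)).filter fun x => g x = y, x ∈ Qa (a, t) ∧ g x = y :=
          fun x hx => Finset.mem_filter.1 hx
        obtain ⟨u, hu, v, hv, huv⟩ := Finset.one_lt_card.1 (not_le.1 hone)
        obtain ⟨j₀, hj₀, _⟩ := hlate u (hmem u hu).1 v (hmem v hv).1
          ((hmem u hu).2.trans (hmem v hv).2.symm) huv
        obtain ⟨n', rfl⟩ : ∃ n', n = t + 1 + n' := ⟨n - (t + 1), by omega⟩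
        have hinj : Set.InjOn f^[t + 1] ((Qa (a, t)).filter fun x => g x = y : Finset M) := by
          intro x hx z hz hxz
          by_contra hne
          obtain ⟨j, _, hj⟩ := hlate x (hmem x hx).1 z (hmem z hz).1
            ((hmem x hx).2.trans (hmem z hz).2.symm) hne
          rw [hxz, dist_self] at hj
          linarith
        rw [← Finset.card_image_of_injOn hinj]
        have hih := ih (S.erase a) (by rw [Finset.card_erase_of_mem haS, hS]; rfl) n'
          (((Qa (a, t)).filter fun x => g x = y).image f^[t + 1]) (by
            intro z hz j hj
            obtain ⟨x, hx, rfl⟩ := Finset.mem_image.1 hz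
            have hx' := Finset.mem_filter.1 (hmem x hx).1
            rw [← Function.iterate_add_apply, Finset.mem_erase]
            exact ⟨hx'.2.2.2 _ (by simp only; omega) (by omega), hQ x hx'.1 _ (by omega)⟩) (by
            intro z hz w hw hne
            obtain ⟨x, hx, rfl⟩ := Finset.mem_image.1 hz
            obtain ⟨x', hx', rfl⟩ := Finset.mem_image.1 hw
            obtain ⟨j, hj, hd⟩ := hlate x (hmem x hx).1 x' (hmem x' hx').1
              ((hmem x hx).2.trans (hmem x' hx').2.symm) (fun h => hne (by rw [h]))
            exact ⟨j, by omega, hd⟩)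
        refine hih.trans ?_
        push_cast
        have h0 : (0 : ℝ) ≤ t := Nat.cast_nonneg t
        gcongr
        · linarith
        · linarith
      have hsum : ((Qa (a, t)).card : ℝ) =
          ∑ y ∈ C, (((Qa (a, t)).filter fun x => g x = y).card : ℝ) := by
        rw [Finset.card_eq_sum_card_fiberwise (f := g) (t := C) (fun x hx => hgC x hx)]
        push_cast
        rfl
      rw [hsum]
      refine (Finset.sum_le_sum hfib).trans ?_
      rw [Finset.sum_const, nsmul_eq_mul]
      calc (C.card : ℝ) * ((Fintype.card V * (n + 1) : ℝ) ^ k * Real.exp (c * (n - t)))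
          ≤ Real.exp (c * t) * ((Fintype.card V * (n + 1) : ℝ) ^ k * Real.exp (c * (n - t))) := by
            gcongr
        _ = (Fintype.card V * (n + 1) : ℝ) ^ k * (Real.exp (c * t) * Real.exp (c * (n - t))) := by
            ring
        _ = _ := by
            rw [← Real.exp_add]
            congr 2
            ring
    calc (Q.card : ℝ) ≤ (((Finset.univ ×ˢ Finset.range (n + 1)).biUnion Qa).card : ℝ) := by
          exact_mod_cast Finset.card_le_card hcover
      _ ≤ ∑ q ∈ (Finset.univ : Finset V) ×ˢ Finset.range (n + 1), ((Qa q).card : ℝ) := by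
          exact_mod_cast Finset.card_biUnion_le
      _ ≤ ∑ q ∈ (Finset.univ : Finset V) ×ˢ Finset.range (n + 1),
            (Fintype.card V * (n + 1) : ℝ) ^ k * Real.exp (c * n) := Finset.sum_le_sum key
      _ = _ := by
          rw [Finset.sum_const, Finset.card_product, Finset.card_univ, Finset.card_range,
            nsmul_eq_mul]
          push_cast
          ring

/-- Below the topological entropy there is a scale at which, for every finite labelling of the
space, the loops at some symbol already carry exponential growth rate more than `c`. -/
theorem exists_loops (f : M → M) {c : ℝ} (hc : 0 ≤ c) (h : (c : EReal) < topEntropy f) :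
    ∃ ε > 0, ∀ (V : Type) [Fintype V] (lab : M → V), ∃ (a : V) (N : ℕ) (Q : Finset M),
      (∀ x ∈ Q, lab x = a ∧ lab (f^[N] x) = a) ∧ IsDynSep f N (ε / 2) (Q : Set M) ∧
      Real.exp (c * N) < Q.card := by
  unfold topEntropy topEntropyOn at h
  simp only [lt_iSup_iff] at h
  obtain ⟨ε, hε, h⟩ := h
  refine ⟨ε, hε, fun V _ lab => ?_⟩
  by_contra hcon
  push Not at hcon
  have hcount := card_le_of_loops f lab hε hc hcon (Fintype.card V) Finset.univ rfl
  obtain ⟨c', hcc', hc'⟩ := EReal.lt_iff_exists_real_btwn.1 h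
  have hfreq := frequently_lt_of_lt_limsup (by isBoundedDefault) hc'
  have hcc : c < c' := by exact_mod_cast hcc'
  -- the polynomial factor is eventually beaten by the exponential gap
  have htend : Tendsto (fun n : ℕ => (Fintype.card V * (n + 1) : ℝ) ^ Fintype.card V *
      Real.exp (-(c' - c) * n)) atTop (𝓝 0) := by
    have h1 := (Real.tendsto_pow_mul_exp_neg_atTop_nhds_zero (Fintype.card V)).comp
      (Tendsto.const_mul_atTop (sub_pos.2 hcc)
        (tendsto_atTop_add_const_right atTop (1 : ℝ) (tendsto_natCast_atTop_atTop (R := ℝ))))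
    have h2 := h1.const_mul ((Fintype.card V / (c' - c)) ^ Fintype.card V * Real.exp (c' - c))
    rw [mul_zero] at h2
    refine h2.congr fun n => ?_
    have hne : c' - c ≠ 0 := (sub_pos.2 hcc).ne'
    simp only [Function.comp]
    have e : Real.exp (-(c' - c) * n) =
        Real.exp (c' - c) * Real.exp (-((c' - c) * ((n : ℝ) + 1))) := by
      rw [← Real.exp_add]
      congr 1
      ring
    rw [e, div_pow, mul_pow, mul_pow]
    field_simp
  obtain ⟨n, hn, hlt, hn0⟩ := (hfreq.and_eventually
    ((htend.eventually (gt_mem_nhds one_pos)).and (eventually_gt_atTop 0))).exists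
  have hn0' : (0 : ℝ) < n := by exact_mod_cast hn0
  have hn' : c' * n < Real.log (sepCount f Set.univ n ε) := by
    rw [← lt_div_iff₀ hn0']
    exact_mod_cast hn
  have hpos : 0 < sepCount f Set.univ n ε := by
    rw [Nat.pos_iff_ne_zero]
    intro h0
    rw [h0] at hn'
    simp only [Nat.cast_zero, Real.log_zero] at hn'
    nlinarith
  have hmem : sepCount f Set.univ n ε ∈ {k : ℕ | ∃ Q : Finset M, ↑Q ⊆ (Set.univ : Set M) ∧
      IsDynSep f n ε ↑Q ∧ Q.card = k} := by
    refine Nat.sSup_mem ⟨0, ∅, by simp [IsDynSep]⟩ ?_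
    refine ⟨⌈(Fintype.card V * (n + 1) : ℝ) ^ Fintype.card V * Real.exp (c * n)⌉₊, ?_⟩
    rintro k ⟨Q, -, hQ, rfl⟩
    exact Nat.cast_le.1 ((hcount n Q (fun _ _ _ _ => Finset.mem_univ _) hQ).trans (Nat.le_ceil _))
  obtain ⟨Q, -, hQ, hcard⟩ := hmem
  have hQc := hcount n Q (fun _ _ _ _ => Finset.mem_univ _) hQ
  have hexp : Real.exp (c' * n) < Q.card := by
    rw [hcard, ← Real.exp_log (show (0 : ℝ) < sepCount f Set.univ n ε by exact_mod_cast hpos)]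
    exact Real.exp_lt_exp.2 hn'
  have hlt2 := hexp.trans_le hQc
  have e : Real.exp (-(c' - c) * n) = Real.exp (c * n) / Real.exp (c' * n) := by
    rw [← Real.exp_sub]
    congr 1
    ring
  rw [e, mul_div_assoc', div_lt_one (Real.exp_pos _)] at hlt
  linarith

end Loops

/-! ### The coded horseshoe -/

section Horse

theorem orbit_nat {M : Type*} {f : M → M} {z : ℤ → M} (hz : ∀ n : ℤ, z (n + 1) = f (z n))
    (k : ℤ) (n : ℕ) :
    z (k + n) = f^[n] (z k) := by
  induction n with
  | zero => simp
  | succ n ih =>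
    rw [Function.iterate_succ_apply', ← ih, ← hz]
    push_cast
    ring_nf

variable {M : Type*} [MetricSpace M]

/-- A compact space has finite labellings with fibres of arbitrarily small diameter. -/
theorem exists_labelling [CompactSpace M] {r : ℝ} (hr : 0 < r) :
    ∃ (n : ℕ) (lab : M → Fin n), ∀ x y, lab x = lab y → dist x y ≤ r := by
  obtain ⟨t, -, htf, ht⟩ := finite_cover_balls_of_compact (isCompact_univ (X := M)) (half_pos hr)
  lift t to Finset M using htf
  have hex : ∀ x : M, ∃ y : t, dist x y < r / 2 := by
    intro x
    have := ht (mem_univ x)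
    simp only [mem_iUnion, Metric.mem_ball, Finset.mem_coe] at this
    obtain ⟨y, hy, h⟩ := this
    exact ⟨⟨y, hy⟩, h⟩
  choose g hg using hex
  refine ⟨t.card, fun x => t.equivFin (g x), fun x y hxy => ?_⟩
  have hxy' : g x = g y := t.equivFin.injective hxy
  have h1 := hg x
  have h2 := hg y
  rw [← hxy'] at h2
  linarith [dist_triangle_right x y (g x)]

/-- The pseudo-orbit obtained by concatenating the orbit segments of length `N` issued from the
points `x (s i)`. -/
def concat {M : Type*} (f : M → M) (N m : ℕ) (x : Fin m → M) (s : ℤ → Fin m) (n : ℤ) : M :=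
  f^[(n % N).toNat] (x (s (n / N)))

theorem concat_pseudo {f : M → M} {N m : ℕ} (hN : 0 < N) {x : Fin m → M} {δ : ℝ} (hδ : 0 < δ)
    (hx : ∀ i j, dist (f^[N] (x i)) (x j) ≤ δ) (s : ℤ → Fin m) (n : ℤ) :
    dist (f (concat f N m x s n)) (concat f N m x s (n + 1)) ≤ δ := by
  have hN' : (0 : ℤ) < N := by exact_mod_cast hN
  have h0 := Int.emod_nonneg n hN'.ne'
  have h1 := Int.emod_lt_of_pos n hN'
  have h2 := Int.mul_ediv_add_emod n N
  unfold concat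
  rw [← Function.iterate_succ_apply' f]
  by_cases h : n % N + 1 < N
  · have e : (n + 1) / N = n / N ∧ (n + 1) % N = n % N + 1 := by
      rw [Int.ediv_emod_unique hN']
      exact ⟨by linarith, by omega, h⟩
    rw [e.1, e.2, show (n % N + 1).toNat = (n % N).toNat + 1 by omega, dist_self]
    exact hδ.le
  · have e : (n + 1) / N = n / N + 1 ∧ (n + 1) % N = 0 := by
      rw [Int.ediv_emod_unique hN']
      refine ⟨?_, le_rfl, hN'⟩
      have : n % N = N - 1 := by omega
      rw [this] at h2
      linarith
    rw [e.1, e.2, show (n % N).toNat.succ = N by omega]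
    exact hx _ _

theorem concat_shift {M : Type*} {f : M → M} {N m : ℕ} (hN : 0 < N) (x : Fin m → M)
    (s : ℤ → Fin m) (n : ℤ) :
    concat f N m x (fullShift (Fin m) s) n = concat f N m x s (n + N) := by
  have hN' : (N : ℤ) ≠ 0 := by exact_mod_cast hN.ne'
  unfold concat fullShift
  rw [Int.add_emod_right, Int.add_ediv_of_dvd_right (dvd_refl _), Int.ediv_self hN']

theorem concat_nat {M : Type*} {f : M → M} {N m : ℕ} (x : Fin m → M) (s : ℤ → Fin m) {j : ℕ}
    (hj : j < N) : concat f N m x s j = f^[j] (x (s 0)) := by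
  unfold concat
  rw [Int.emod_eq_of_lt (by omega) (by omega), Int.ediv_eq_zero_of_lt (by omega) (by omega)]
  rfl

/-- An expansive homeomorphism with shadowing has, below its entropy, a power `f^[N]` that
contains a continuous image of a full shift on more than `exp (c * N)` symbols, on which
distinct zeroth symbols are detected at a definite scale within time `N`. -/
theorem exists_coded_horseshoe [CompactSpace M] {f : M → M} (hf : IsHomeomorph f)
    (hexp : Expansive f) (hsh : ShadowingProperty f) {c : ℝ} (hc : 0 ≤ c)
    (h : (c : EReal) < topEntropy f) :
    ∃ (m N : ℕ) (π : (ℤ → Fin m) → M) (κ : ℝ), 0 < N ∧ 0 < κ ∧ c * N < Real.log m ∧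
      Continuous π ∧ (∀ s, f^[N] (π s) = π (fullShift (Fin m) s)) ∧
      ∀ s s', s 0 ≠ s' 0 → ∃ j < N, κ < dist (f^[j] (π s)) (f^[j] (π s')) := by
  obtain ⟨e, he, hexp⟩ := hexp
  obtain ⟨ε, hε, hloop⟩ := exists_loops f hc h
  set α := min (e / 2) (ε / 8) with hα
  have hα0 : 0 < α := lt_min (by positivity) (by positivity)
  have hαe : α ≤ e / 2 := min_le_left _ _
  have hαε : α ≤ ε / 8 := min_le_right _ _
  obtain ⟨δ, hδ, hsh⟩ := hsh α hα0
  obtain ⟨nV, lab, hlab⟩ := exists_labelling (M := M) (lt_min hδ (half_pos hε))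
  obtain ⟨a, N, Q, hQ, hsep, hcard⟩ := hloop (Fin nV) lab
  have hN : 0 < N := by
    rw [Nat.pos_iff_ne_zero]
    rintro rfl
    simp only [Nat.cast_zero, mul_zero, Real.exp_zero, Nat.one_lt_cast] at hcard
    obtain ⟨u, hu, v, hv, huv⟩ := Finset.one_lt_card.1 hcard
    obtain ⟨j, hj, hd⟩ := hsep hu hv huv
    obtain rfl : j = 0 := by omega
    have := (hlab u v ((hQ u hu).1.trans (hQ v hv).1.symm)).trans (min_le_right _ _)
    simp only [Function.iterate_zero, id] at hd
    linarith
  set m := Q.card with hm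
  let x : Fin m → M := fun i => (Q.equivFin.symm i : M)
  have hxQ : ∀ i, x i ∈ Q := fun i => (Q.equivFin.symm i).2
  have hxinj : Function.Injective x := fun i j hij =>
    Q.equivFin.symm.injective (Subtype.ext hij)
  have hxx : ∀ i j, dist (f^[N] (x i)) (x j) ≤ δ := fun i j =>
    (hlab _ _ ((hQ _ (hxQ i)).2.trans (hQ _ (hxQ j)).1.symm)).trans (min_le_left _ _)
  choose z hz hzd using fun s => hsh (concat f N m x s) (concat_pseudo hN hδ hxx s)
  have huniq : ∀ s (w : ℤ → M), (∀ n, w (n + 1) = f (w n)) →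
      (∀ n, dist (w n) (concat f N m x s n) ≤ α) → w 0 = z s 0 := by
    intro s w hw hwd
    refine hexp w (z s) hw (hz s) fun n => ?_
    linarith [dist_triangle_right (w n) (z s n) (concat f N m x s n), hwd n, hzd s n]
  refine ⟨m, N, fun s => z s 0, ε / 4, hN, by positivity, ?_, ?_, ?_, ?_⟩
  · rwa [Real.lt_log_iff_exp_lt ((Real.exp_pos _).trans hcard)]
  · let F : M ≃ₜ M := hf.homeomorph
    have hF : ∀ y, F y = f y := fun y => rfl
    have hFz : ∀ (n : ℤ) y, (F ^ (n + 1)) y = f ((F ^ n) y) := by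
      intro n y
      rw [add_comm, zpow_add, zpow_one]
      rfl
    have hzF : ∀ s (n : ℤ), z s n = (F ^ n) (z s 0) := by
      intro s n
      induction n using Int.induction_on with
      | zero => rfl
      | succ n ih => rw [hz, hFz, ih]
      | pred n ih =>
        apply hf.injective
        rw [← hz, ← hFz]
        simpa using ih
    have hgraph : {q : (ℤ → Fin m) × M | q.2 = z q.1 0} =
        ⋂ n : ℤ, {q | dist ((F ^ n) q.2) (concat f N m x q.1 n) ≤ α} := by
      ext ⟨s, y⟩
      simp only [mem_ofPred_eq, mem_iInter]
      constructor
      · rintro rfl n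
        rw [← hzF]
        exact hzd s n
      · intro hy
        exact huniq s (fun n => (F ^ n) y) (fun n => hFz n y) hy
    have hclosed : IsClosed {q : (ℤ → Fin m) × M | q.2 = z q.1 0} := by
      rw [hgraph]
      refine isClosed_iInter fun n => isClosed_le (Continuous.dist ?_ ?_) continuous_const
      · exact (F ^ n).continuous.comp continuous_snd
      · exact (continuous_of_discreteTopology (f := fun i : Fin m => f^[(n % N).toNat] (x i))).comp
          ((continuous_apply (n / N : ℤ)).comp continuous_fst)
    -- a map into a compact space with closed graph is continuous
    rw [continuous_iff_isClosed]
    intro K hK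
    have himg : (fun s => z s 0) ⁻¹' K =
        Prod.fst '' ({q : (ℤ → Fin m) × M | q.2 = z q.1 0} ∩ Prod.snd ⁻¹' K) := by
      ext s
      simp
    rw [himg]
    exact isClosedMap_fst_of_compactSpace _ (hclosed.inter (hK.preimage continuous_snd))
  · intro s
    have h1 := huniq (fullShift (Fin m) s) (fun n => z s (n + N)) (fun n => by
      rw [← hz]
      ring_nf) (fun n => by
      rw [concat_shift hN]
      exact hzd s _)
    change f^[N] (z s 0) = z (fullShift (Fin m) s) 0
    rw [← h1, orbit_nat (hz s)]
  · intro s s' hss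
    obtain ⟨j, hj, hd⟩ := hsep (hxQ (s 0)) (hxQ (s' 0)) (fun h => hss (hxinj h))
    have hjN : j < N := by
      refine lt_of_le_of_ne hj ?_
      rintro rfl
      have := (hlab _ _ ((hQ _ (hxQ (s 0))).2.trans (hQ _ (hxQ (s' 0))).2.symm)).trans
        (min_le_right _ _)
      linarith
    refine ⟨j, hjN, ?_⟩
    have h1 := hzd s j
    have h2 := hzd s' j
    rw [concat_nat x s hjN] at h1
    rw [concat_nat x s' hjN] at h2
    have e1 := orbit_nat (hz s) 0 j
    have e2 := orbit_nat (hz s') 0 j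
    rw [zero_add] at e1 e2
    rw [e1, dist_comm] at h1
    rw [e2] at h2
    have := dist_triangle4 (f^[j] (x (s 0))) (f^[j] (z s 0)) (f^[j] (z s' 0)) (f^[j] (x (s' 0)))
    linarith

end Horse

/-! ### Hereditary Sturmian subshifts -/

section Sturmian

/-- The positions `i < L` at which the rotation by `t` with initial phase `θ` wraps around. -/
noncomputable def wraps (t θ : ℝ) (L : ℕ) : Finset (Fin L) :=
  Finset.univ.filter fun i => ⌊((i : ℕ) + 1 : ℝ) * t + θ⌋ ≠ ⌊((i : ℕ) : ℝ) * t + θ⌋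

theorem card_wraps {t θ : ℝ} (ht0 : 0 ≤ t) (ht1 : t ≤ 1) (hθ0 : 0 ≤ θ) (hθ1 : θ < 1) (L : ℕ) :
    ((wraps t θ L).card : ℤ) = ⌊(L : ℝ) * t + θ⌋ := by
  have hterm : ∀ i : ℕ, (if ⌊((i : ℝ) + 1) * t + θ⌋ ≠ ⌊(i : ℝ) * t + θ⌋ then (1 : ℤ) else 0) =
      ⌊((i + 1 : ℕ) : ℝ) * t + θ⌋ - ⌊(i : ℝ) * t + θ⌋ := by
    intro i
    push_cast
    have h1 : ⌊(i : ℝ) * t + θ⌋ ≤ ⌊((i : ℝ) + 1) * t + θ⌋ := Int.floor_le_floor (by nlinarith)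
    have h2 : ⌊((i : ℝ) + 1) * t + θ⌋ ≤ ⌊(i : ℝ) * t + θ⌋ + 1 := by
      rw [← Int.floor_add_one]
      exact Int.floor_le_floor (by nlinarith)
    split_ifs with h
    · omega
    · omega
  have h0 : ⌊((0 : ℕ) : ℝ) * t + θ⌋ = 0 := by
    rw [Int.floor_eq_zero_iff]
    simp [hθ0, hθ1]
  have hsum := Finset.sum_range_sub (fun i : ℕ => ⌊(i : ℝ) * t + θ⌋) L
  rw [h0, sub_zero] at hsum
  rw [← hsum, wraps, Finset.card_filter, Nat.cast_sum]
  rw [← Fin.sum_univ_eq_sum_range (fun i : ℕ => ⌊((i + 1 : ℕ) : ℝ) * t + θ⌋ - ⌊(i : ℝ) * t + θ⌋)]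
  refine Finset.sum_congr rfl fun i _ => ?_
  rw [← hterm i]
  push_cast
  rfl

/-- The words supported on the wrap-around positions of some rotation orbit of angle `t`. -/
def adm (t : ℝ) (m L : ℕ) : Set (Fin L → Fin m) :=
  {w | ∃ θ : ℝ, 0 ≤ θ ∧ θ < 1 ∧ ∀ i : Fin L, (w i : ℕ) ≠ 0 → i ∈ wraps t θ L}

/-- The words over `Fin m` supported on `D`. -/
def supported {m L : ℕ} (D : Finset (Fin L)) : Finset (Fin L → Fin m) :=
  Fintype.piFinset fun i => Finset.univ.filter fun a : Fin m => (a : ℕ) ≠ 0 → i ∈ D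

theorem mem_supported {m L : ℕ} {D : Finset (Fin L)} {w : Fin L → Fin m} :
    w ∈ supported D ↔ ∀ i, (w i : ℕ) ≠ 0 → i ∈ D := by
  simp [supported, Fintype.mem_piFinset]

theorem card_supported {m L : ℕ} (hm : 0 < m) (D : Finset (Fin L)) :
    (supported (m := m) D).card = m ^ D.card := by
  rw [supported, Fintype.card_piFinset]
  have h : ∀ i : Fin L, (Finset.univ.filter fun a : Fin m => (a : ℕ) ≠ 0 → i ∈ D).card =
      if i ∈ D then m else 1 := by
    intro i
    split_ifs with hi
    · simp [hi]
    · rw [Finset.card_eq_one]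
      refine ⟨⟨0, hm⟩, ?_⟩
      ext a
      simp [hi, Fin.ext_iff]
  rw [Finset.prod_congr rfl fun i _ => h i, Finset.prod_ite]
  simp

/-- Only `L + 2` patterns of wrap-around positions occur: the pattern is determined by the sum
of the floors `⌊i * t + θ⌋`, because each of these floors is monotone in `θ`. -/
theorem ncard_adm_le {t : ℝ} (ht0 : 0 ≤ t) (ht1 : t ≤ 1) {m : ℕ} (hm : 0 < m) (L : ℕ) :
    ((adm t m L).ncard : ℝ) ≤ (L + 2) * (m : ℝ) ^ (L * t + 1) := by
  classical
  let S : ℝ → ℤ := fun θ => ∑ i ∈ Finset.range (L + 1), ⌊(i : ℝ) * t + θ⌋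
  have hdet : ∀ θ θ', θ ≤ θ' → S θ = S θ' → wraps t θ L = wraps t θ' L := by
    intro θ θ' hle hS
    have h := (Finset.sum_eq_sum_iff_of_le fun i (_ : i ∈ Finset.range (L + 1)) =>
      Int.floor_le_floor (show (i : ℝ) * t + θ ≤ i * t + θ' by linarith)).1 hS
    unfold wraps
    refine Finset.filter_congr fun i _ => ?_
    have h1 := h i (Finset.mem_range.2 (by omega))
    have h2 := h (i + 1) (Finset.mem_range.2 (by omega))
    push_cast at h2
    rw [h1, h2]
  have hrange : ∀ θ, 0 ≤ θ → θ < 1 → S θ ∈ Finset.Icc (S 0) (S 0 + (L + 1)) := by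
    intro θ h0 h1
    rw [Finset.mem_Icc]
    constructor
    · exact Finset.sum_le_sum fun i _ => Int.floor_le_floor (by linarith)
    · calc S θ ≤ ∑ i ∈ Finset.range (L + 1), (⌊(i : ℝ) * t + 0⌋ + 1) := by
            refine Finset.sum_le_sum fun i _ => ?_
            rw [← Int.floor_add_one]
            exact Int.floor_le_floor (by linarith)
        _ = _ := by
            rw [Finset.sum_add_distrib]
            simp [S]
  let Φ : ℤ → Finset (Fin L → Fin m) := fun k =>
    if h : ∃ θ, 0 ≤ θ ∧ θ < 1 ∧ S θ = k then supported (wraps t h.choose L) else ∅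
  have hm1 : (1 : ℝ) ≤ m := by exact_mod_cast hm
  have hΦ : ∀ k, ((Φ k).card : ℝ) ≤ (m : ℝ) ^ (L * t + 1) := by
    intro k
    simp only [Φ]
    split_ifs with h
    · obtain ⟨h0, h1, -⟩ := h.choose_spec
      rw [card_supported hm]
      push_cast
      rw [← Real.rpow_natCast]
      refine Real.rpow_le_rpow_of_exponent_le hm1 ?_
      have hc := card_wraps ht0 ht1 h0 h1 L
      have hfl := Int.floor_le ((L : ℝ) * t + h.choose)
      rw [← hc] at hfl
      push_cast at hfl
      linarith
    · simp only [Finset.card_empty, Nat.cast_zero]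
      positivity
  have hsub : adm t m L ⊆ ((Finset.Icc (S 0) (S 0 + (L + 1))).biUnion Φ : Finset _) := by
    rintro w ⟨θ, h0, h1, hw⟩
    rw [Finset.mem_coe, Finset.mem_biUnion]
    refine ⟨S θ, hrange θ h0 h1, ?_⟩
    have hex : ∃ θ', 0 ≤ θ' ∧ θ' < 1 ∧ S θ' = S θ := ⟨θ, h0, h1, rfl⟩
    simp only [Φ, dif_pos hex]
    have hwr : wraps t hex.choose L = wraps t θ L := by
      rcases le_total hex.choose θ with h | h
      · exact hdet _ _ h hex.choose_spec.2.2
      · exact (hdet _ _ h hex.choose_spec.2.2.symm).symm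
    rw [hwr, mem_supported]
    exact hw
  have h1 := Set.ncard_le_ncard hsub (Finset.finite_toSet _)
  rw [Set.ncard_coe_finset] at h1
  calc ((adm t m L).ncard : ℝ)
      ≤ (((Finset.Icc (S 0) (S 0 + (L + 1))).biUnion Φ).card : ℝ) := by exact_mod_cast h1
    _ ≤ ∑ k ∈ Finset.Icc (S 0) (S 0 + (L + 1)), ((Φ k).card : ℝ) := by
        exact_mod_cast Finset.card_biUnion_le
    _ ≤ ∑ k ∈ Finset.Icc (S 0) (S 0 + (L + 1)), (m : ℝ) ^ (L * t + 1) :=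
        Finset.sum_le_sum fun k _ => hΦ k
    _ = _ := by
        rw [Finset.sum_const, Int.card_Icc, nsmul_eq_mul]
        congr 1
        have : (S 0 + ((L : ℤ) + 1) + 1 - S 0).toNat = L + 2 := by omega
        rw [this]
        push_cast
        ring

/-- The hereditary Sturmian subshift of angle `t`: all words are supported on the wrap-around
positions of a rotation by `t`. -/
def sturm (t : ℝ) (m : ℕ) : Set (ℤ → Fin m) :=
  {x | ∀ (a : ℤ) (n : ℕ), block a n x ∈ adm t m n}

theorem isClosed_sturm (t : ℝ) (m : ℕ) : IsClosed (sturm t m) := by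
  have : sturm t m = ⋂ (a : ℤ) (n : ℕ), block a n ⁻¹' adm t m n := by
    ext x
    simp [sturm]
  rw [this]
  refine isClosed_iInter fun a => isClosed_iInter fun n => ?_
  refine IsClosed.preimage (continuous_pi fun i => continuous_apply _) (isClosed_discrete _)

theorem fullShift_mem_sturm {t : ℝ} {m : ℕ} {x : ℤ → Fin m} :
    fullShift (Fin m) x ∈ sturm t m ↔ x ∈ sturm t m := by
  have h : ∀ (a : ℤ) (n : ℕ), block a n (fullShift (Fin m) x) = block (a + 1) n x := by
    intro a n
    ext1 i
    simp only [block, fullShift]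
    congr 1
    ring
  constructor
  · intro hx a n
    have := hx (a - 1) n
    rwa [h, sub_add_cancel] at this
  · intro hx a n
    rw [h]
    exact hx _ _

/-- Extension of a finite word by the zero symbol. -/
def extendWord {m K : ℕ} (hm : 0 < m) (w : Fin K → Fin m) : ℤ → Fin m := fun i =>
  if h : 0 ≤ i ∧ i < K then w ⟨i.toNat, by omega⟩ else ⟨0, hm⟩

theorem extendWord_apply {m K : ℕ} (hm : 0 < m) (w : Fin K → Fin m) (i : Fin K) :
    extendWord hm w (i : ℕ) = w i := by
  unfold extendWord
  rw [dif_pos ⟨by omega, by omega⟩]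
  rfl

theorem extendWord_mem_sturm {t : ℝ} {m K : ℕ} (hm : 0 < m) {w : Fin K → Fin m}
    (hw : w ∈ supported (m := m) (wraps t 0 K)) : extendWord hm w ∈ sturm t m := by
  intro a n
  refine ⟨Int.fract ((a : ℝ) * t), Int.fract_nonneg _, Int.fract_lt_one _, fun i hi => ?_⟩
  simp only [block, extendWord] at hi
  split_ifs at hi with h
  swap
  · simp at hi
  have h2 := mem_supported.1 hw _ hi
  unfold wraps at h2 ⊢
  rw [Finset.mem_filter] at h2 ⊢
  refine ⟨Finset.mem_univ _, fun heq => h2.2 ?_⟩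
  have e : (((a + (i : ℕ)).toNat : ℕ) : ℝ) = a + (i : ℕ) := by
    have : (((a + (i : ℕ)).toNat : ℕ) : ℤ) = a + (i : ℕ) := by omega
    exact_mod_cast this
  have key : ∀ b : ℝ, ⌊b * t + Int.fract ((a : ℝ) * t)⌋ = ⌊(a + b) * t⌋ - ⌊(a : ℝ) * t⌋ := by
    intro b
    rw [← Int.floor_sub_intCast, Int.fract]
    congr 1
    ring
  rw [key, key] at heq
  simp only [e, add_zero]
  rw [add_assoc]
  linarith

end Sturmian

/-! ### The compact invariant set and its topological entropy -/

section Coded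

variable {M : Type*} {f : M → M} {m N : ℕ} {π : (ℤ → Fin m) → M}

theorem iterate_coded (hπ : ∀ s, f^[N] (π s) = π (fullShift (Fin m) s)) (q : ℕ)
    (s : ℤ → Fin m) : f^[q * N] (π s) = π ((fullShift (Fin m))^[q] s) := by
  induction q generalizing s with
  | zero => simp
  | succ q ih => rw [Nat.succ_mul, Function.iterate_add_apply, hπ, ih, Function.iterate_succ_apply]

theorem iterate_coded_mod (hπ : ∀ s, f^[N] (π s) = π (fullShift (Fin m) s)) (i : ℕ)
    (s : ℤ → Fin m) : f^[i] (π s) = f^[i % N] (π ((fullShift (Fin m))^[i / N] s)) := by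
  rw [← iterate_coded hπ, ← Function.iterate_add_apply, Nat.mod_add_div']

/-- The union of the first `N` iterates of the coded image of the Sturmian subshift. -/
def codedSet (f : M → M) (N : ℕ) (π : (ℤ → Fin m) → M) (t : ℝ) : Set M :=
  {y | ∃ j < N, ∃ s ∈ sturm t m, f^[j] (π s) = y}

theorem image_codedSet (hN : 0 < N) (hπ : ∀ s, f^[N] (π s) = π (fullShift (Fin m) s)) (t : ℝ) :
    f '' codedSet f N π t = codedSet f N π t := by
  ext y
  constructor
  · rintro ⟨_, ⟨j, hj, s, hs, rfl⟩, rfl⟩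
    rw [← Function.iterate_succ_apply' f]
    by_cases h : j + 1 < N
    · exact ⟨j + 1, h, s, hs, rfl⟩
    · refine ⟨0, hN, fullShift (Fin m) s, fullShift_mem_sturm.2 hs, ?_⟩
      rw [← hπ, show N = j.succ by omega]
      rfl
  · rintro ⟨j, hj, s, hs, rfl⟩
    rcases j with _ | j
    · let s' : ℤ → Fin m := fun i => s (i - 1)
      have hs' : fullShift (Fin m) s' = s := by
        ext1 i
        simp [fullShift, s']
      refine ⟨f^[N - 1] (π s'), ⟨N - 1, by omega, s', ?_, rfl⟩, ?_⟩
      · rw [← fullShift_mem_sturm, hs']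
        exact hs
      · rw [← Function.iterate_succ_apply' f, show (N - 1).succ = N by omega, hπ, hs']
        rfl
    · exact ⟨f^[j] (π s), ⟨j, by omega, s, hs, rfl⟩, (Function.iterate_succ_apply' f j _).symm⟩

variable [MetricSpace M]

theorem isCompact_codedSet (hf : Continuous f) (hc : Continuous π) (t : ℝ) :
    IsCompact (codedSet f N π t) := by
  have : codedSet f N π t = ⋃ j ∈ Finset.range N, (fun s => f^[j] (π s)) '' sturm t m := by
    ext y
    simp [codedSet]
  rw [this]
  exact (Finset.range N).isCompact_biUnion fun j _ =>
    (isClosed_sturm t m).isCompact.image ((hf.iterate j).comp hc)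

/-- Continuity of the coding, in finitary form. -/
theorem exists_window (hf : Continuous f) (hc : Continuous π) {ε : ℝ} (hε : 0 < ε) :
    ∃ k : ℕ, ∀ s s', (∀ i : ℤ, -(k : ℤ) ≤ i → i ≤ k → s i = s' i) →
      ∀ j < N, dist (f^[j] (π s)) (f^[j] (π s')) ≤ ε := by
  have hone : ∀ j : ℕ, ∃ k : ℕ, ∀ s s', (∀ i : ℤ, -(k : ℤ) ≤ i → i ≤ k → s i = s' i) →
      dist (f^[j] (π s)) (f^[j] (π s')) ≤ ε := by
    intro j
    by_contra hcon
    push Not at hcon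
    let K : ℕ → Set ((ℤ → Fin m) × (ℤ → Fin m)) := fun k =>
      (⋂ i ∈ Set.Icc (-(k : ℤ)) k, {q | q.1 i = q.2 i}) ∩
        {q | ε ≤ dist (f^[j] (π q.1)) (f^[j] (π q.2))}
    have hcl : ∀ k, IsClosed (K k) := by
      intro k
      refine IsClosed.inter (isClosed_biInter fun i _ => isClosed_eq ?_ ?_) (isClosed_le ?_ ?_)
      · exact (continuous_apply i).comp continuous_fst
      · exact (continuous_apply i).comp continuous_snd
      · exact continuous_const
      · exact (((hf.iterate j).comp hc).comp continuous_fst).dist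
          (((hf.iterate j).comp hc).comp continuous_snd)
    obtain ⟨⟨s, s'⟩, hmem⟩ := IsCompact.nonempty_iInter_of_sequence_nonempty_isCompact_isClosed K
      (fun k q hq => ⟨mem_iInter₂.2 fun i hi => mem_iInter₂.1 hq.1 i
        ⟨by have := hi.1; push_cast; omega, by have := hi.2; push_cast; omega⟩, hq.2⟩)
      (fun k => by
        obtain ⟨s, s', h1, h2⟩ := hcon k
        exact ⟨(s, s'), mem_iInter₂.2 fun i hi => h1 i hi.1 hi.2, h2.le⟩)
      (hcl 0).isCompact hcl
    have hss : s = s' := by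
      ext1 i
      have := mem_iInter.1 hmem i.natAbs
      exact mem_iInter₂.1 this.1 i ⟨by omega, by omega⟩
    have := (mem_iInter.1 hmem 0).2
    simp only [mem_ofPred_eq, hss, dist_self] at this
    linarith
  choose k hk using hone
  refine ⟨(Finset.range N).sup k, fun s s' h j hj => hk j s s' fun i h1 h2 => ?_⟩
  have : k j ≤ (Finset.range N).sup k := Finset.le_sup (Finset.mem_range.2 hj)
  exact h i (by omega) (by omega)

theorem card_le_of_sep_codedSet (hN : 0 < N)
    (hπ : ∀ s, f^[N] (π s) = π (fullShift (Fin m) s)) {ε t : ℝ} {k : ℕ}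
    (hk : ∀ s s', (∀ i : ℤ, -(k : ℤ) ≤ i → i ≤ k → s i = s' i) →
      ∀ j < N, dist (f^[j] (π s)) (f^[j] (π s')) ≤ ε) (n : ℕ) (Q : Finset M)
    (hQ : (Q : Set M) ⊆ codedSet f N π t) (hsep : IsDynSep f n ε (Q : Set M)) :
    Q.card ≤ N * (adm t m (n / N + 2 * k + 2)).ncard := by
  classical
  set L := n / N + 2 * k + 2 with hL
  rcases Q.eq_empty_or_nonempty with rfl | ⟨y₀, hy₀⟩
  · simp
  have : Nonempty (ℤ → Fin m) := by
    obtain ⟨_, _, s, _⟩ := hQ hy₀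
    exact ⟨s⟩
  choose! j hj s hs hjs using fun y (hy : y ∈ Q) => hQ hy
  let T : Finset (ℕ × (Fin L → Fin m)) := Finset.range N ×ˢ (Set.toFinite (adm t m L)).toFinset
  have hT : T.card = N * (adm t m L).ncard := by
    rw [Finset.card_product, Finset.card_range, Set.ncard_eq_toFinset_card _ (Set.toFinite _)]
  rw [← hT]
  refine Finset.card_le_card_of_injOn (fun y => (j y, block (-(k : ℤ)) L (s y))) ?_ ?_
  · intro y hy
    simp only [T, Finset.coe_product, mem_prod, Finset.coe_range, mem_Iio,
      Set.Finite.coe_toFinset]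
    exact ⟨hj y hy, hs y hy _ _⟩
  · intro y hy y' hy' heq
    simp only [Prod.mk.injEq] at heq
    by_contra hne
    obtain ⟨i, hin, hi⟩ := hsep hy hy' hne
    refine absurd hi (not_lt.2 ?_)
    rw [← hjs y hy, ← hjs y' hy', ← heq.1, ← Function.iterate_add_apply,
      ← Function.iterate_add_apply, iterate_coded_mod hπ, iterate_coded_mod hπ (i + j y) (s y')]
    refine hk _ _ (fun l h1 h2 => ?_) _ (Nat.mod_lt _ hN)
    rw [fullShift_iterate, fullShift_iterate]
    have hq : (i + j y) / N ≤ n / N + 1 := by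
      rw [← Nat.add_div_right n hN]
      exact Nat.div_le_div_right (by have := hj y hy; omega)
    have hqL : (i + j y) / N + 2 * k + 1 ≤ L := by
      rw [hL]
      linarith
    generalize (i + j y) / N = q at hqL ⊢
    have := congrFun heq.2 ⟨(l + (q : ℕ) + k).toNat, by omega⟩
    simp only [block] at this
    have e : -(k : ℤ) + (((l + (q : ℕ) + k).toNat : ℕ) : ℤ) = l + (q : ℕ) := by omega
    rw [e] at this
    exact this

theorem card_le_sepCount {K : Set M} {n : ℕ} {ε : ℝ} {B : ℕ}
    (hB : ∀ Q : Finset M, (Q : Set M) ⊆ K → IsDynSep f n ε (Q : Set M) → Q.card ≤ B)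
    {Q : Finset M} (hQ : (Q : Set M) ⊆ K) (hs : IsDynSep f n ε (Q : Set M)) :
    Q.card ≤ sepCount f K n ε := by
  refine le_csSup ⟨B, ?_⟩ ⟨Q, hQ, hs, rfl⟩
  rintro k ⟨Q', h1, h2, rfl⟩
  exact hB Q' h1 h2

theorem sepCount_le {K : Set M} {n : ℕ} {ε : ℝ} {B : ℕ}
    (hB : ∀ Q : Finset M, (Q : Set M) ⊆ K → IsDynSep f n ε (Q : Set M) → Q.card ≤ B) :
    sepCount f K n ε ≤ B := by
  refine csSup_le ⟨0, ∅, by simp [IsDynSep]⟩ ?_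
  rintro k ⟨Q', h1, h2, rfl⟩
  exact hB Q' h1 h2

theorem topEntropyOn_codedSet_le (hf : Continuous f) (hN : 0 < N) (hm : 0 < m)
    (hc : Continuous π) (hπ : ∀ s, f^[N] (π s) = π (fullShift (Fin m) s)) {t : ℝ}
    (ht0 : 0 ≤ t) (ht1 : t ≤ 1) :
    topEntropyOn f (codedSet f N π t) ≤ ((t * Real.log m / N : ℝ) : EReal) := by
  refine iSup₂_le fun ε hε => ?_
  obtain ⟨k, hk⟩ := exists_window (N := N) hf hc hε
  have hN' : (0 : ℝ) < N := by exact_mod_cast hN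
  have hm' : (1 : ℝ) ≤ m := by exact_mod_cast hm
  have hlm : 0 ≤ Real.log m := Real.log_nonneg hm'
  have hN1 : (1 : ℝ) ≤ N := by exact_mod_cast hN
  let u : ℕ → ℝ := fun n => (Real.log N + ((2 * k + 2) * t + 1) * Real.log m) / n +
    Real.log ((n : ℝ) + (2 * k + 4)) / n + t * Real.log m / N
  have hu : Tendsto u atTop (𝓝 (t * Real.log m / N)) := by
    have h1 : Tendsto (fun n : ℕ => (Real.log N + ((2 * k + 2) * t + 1) * Real.log m) / (n : ℝ))
        atTop (𝓝 0) := tendsto_const_div_atTop_nhds_zero_nat _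
    have h2 : Tendsto (fun n : ℕ => Real.log ((n : ℝ) + (2 * k + 4)) / n) atTop (𝓝 0) := by
      have hO : (fun n : ℕ => (n : ℝ) + (2 * k + 4)) =O[atTop] fun n : ℕ => (n : ℝ) := by
        refine Asymptotics.IsBigO.of_bound (2 * k + 5) ?_
        filter_upwards [eventually_ge_atTop 1] with n hn
        have hn' : (1 : ℝ) ≤ n := by exact_mod_cast hn
        have hk0 : (0 : ℝ) ≤ k := Nat.cast_nonneg k
        simp only [Real.norm_eq_abs]
        rw [abs_of_nonneg (by positivity), abs_of_nonneg (by positivity)]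
        nlinarith
      exact ((Real.isLittleO_log_id_atTop.comp_tendsto
        (tendsto_atTop_add_const_right atTop (2 * k + 4 : ℝ)
          (tendsto_natCast_atTop_atTop (R := ℝ)))).trans_isBigO hO).tendsto_div_nhds_zero
    simpa using (h1.add h2).add (tendsto_const_nhds (x := t * Real.log m / N))
  have hle : ∀ᶠ n : ℕ in atTop,
      ((Real.log (sepCount f (codedSet f N π t) n ε) / n : ℝ) : EReal) ≤ (u n : EReal) := by
    filter_upwards [eventually_gt_atTop 0] with n hn
    have hn' : (0 : ℝ) < n := by exact_mod_cast hn
    rw [EReal.coe_le_coe_iff]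
    have hcount := sepCount_le fun Q hQ hs =>
      card_le_of_sep_codedSet hN hπ hk n Q (t := t) hQ hs
    set L := n / N + 2 * k + 2 with hL
    have hLr : (L : ℝ) ≤ n / N + 2 * k + 2 := by
      rw [hL]
      push_cast
      have := Nat.cast_div_le (α := ℝ) (m := n) (n := N)
      linarith
    have hLn : (L : ℝ) + 2 ≤ n + (2 * k + 4) := by
      have : (n : ℝ) / N ≤ n := div_le_self hn'.le hN1
      linarith
    have hadm := ncard_adm_le ht0 ht1 hm L
    have hbound : (sepCount f (codedSet f N π t) n ε : ℝ) ≤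
        N * ((n + (2 * k + 4)) * (m : ℝ) ^ ((n / N + 2 * k + 2) * t + 1)) := by
      calc (sepCount f (codedSet f N π t) n ε : ℝ) ≤ N * (adm t m L).ncard := by
            exact_mod_cast hcount
        _ ≤ N * ((L + 2) * (m : ℝ) ^ (L * t + 1)) := by gcongr
        _ ≤ _ := by
            have : (m : ℝ) ^ (L * t + 1) ≤ (m : ℝ) ^ ((n / N + 2 * k + 2) * t + 1) :=
              Real.rpow_le_rpow_of_exponent_le hm' (by nlinarith)
            gcongr
    have hlog : Real.log (sepCount f (codedSet f N π t) n ε) ≤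
        Real.log N + (Real.log (n + (2 * k + 4)) + ((n / N + 2 * k + 2) * t + 1) * Real.log m) := by
      have hm0 : (0 : ℝ) < m := by linarith
      have e : Real.log (N * ((n + (2 * k + 4)) * (m : ℝ) ^ ((n / N + 2 * k + 2) * t + 1))) =
          Real.log N + (Real.log (n + (2 * k + 4)) +
            ((n / N + 2 * k + 2) * t + 1) * Real.log m) := by
        rw [Real.log_mul hN'.ne' (by positivity), Real.log_mul (by positivity) (by positivity),
          Real.log_rpow hm0]
      rcases Nat.eq_zero_or_pos (sepCount f (codedSet f N π t) n ε) with h0 | h0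
      · rw [h0, Nat.cast_zero, Real.log_zero]
        have h1 := Real.log_nonneg hN1
        have h2 : 0 ≤ Real.log (n + (2 * k + 4) : ℝ) := by
          refine Real.log_nonneg ?_
          have : (0 : ℝ) ≤ k := Nat.cast_nonneg k
          linarith
        positivity
      · rw [← e]
        exact Real.log_le_log (by exact_mod_cast h0) hbound
    have : u n = (Real.log N + (Real.log (n + (2 * k + 4)) +
        ((n / N + 2 * k + 2) * t + 1) * Real.log m)) / n := by
      simp only [u]
      field_simp
      ring
    rw [this]
    gcongr
  calc _ ≤ limsup (fun n => (u n : EReal)) atTop := limsup_le_limsup hle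
    _ = _ := ((continuous_coe_real_ereal.tendsto _).comp hu).limsup_eq

theorem le_topEntropyOn_codedSet (hf : Continuous f) (hN : 0 < N) (hm : 0 < m)
    (hc : Continuous π) (hπ : ∀ s, f^[N] (π s) = π (fullShift (Fin m) s)) {κ : ℝ} (hκ : 0 < κ)
    (hsep : ∀ s s', s 0 ≠ s' 0 → ∃ j < N, κ < dist (f^[j] (π s)) (f^[j] (π s'))) {t : ℝ}
    (ht0 : 0 ≤ t) (ht1 : t ≤ 1) :
    ((t * Real.log m / N : ℝ) : EReal) ≤ topEntropyOn f (codedSet f N π t) := by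
  classical
  have hN' : (0 : ℝ) < N := by exact_mod_cast hN
  have hm' : (1 : ℝ) ≤ m := by exact_mod_cast hm
  refine le_trans ?_ (le_iSup₂ (f := fun (ε : ℝ) (_ : 0 < ε) => limsup (fun n : ℕ =>
    ((Real.log (sepCount f (codedSet f N π t) n ε) / n : ℝ) : EReal)) atTop) κ hκ)
  obtain ⟨k, hk⟩ := exists_window (N := N) hf hc hκ
  have hcount : ∀ K : ℕ, (K * t - 1) * Real.log m ≤
      Real.log (sepCount f (codedSet f N π t) (K * N) κ) := by
    intro K
    have hsepw : ∀ w w' : Fin K → Fin m, w ≠ w' → ∃ j ≤ K * N, κ <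
        dist (f^[j] (π (extendWord hm w))) (f^[j] (π (extendWord hm w'))) := by
      intro w w' hne
      obtain ⟨i, hi⟩ := Function.ne_iff.1 hne
      obtain ⟨j, hj, hd⟩ := hsep ((fullShift (Fin m))^[i] (extendWord hm w))
        ((fullShift (Fin m))^[i] (extendWord hm w')) (by
          rw [fullShift_iterate, fullShift_iterate, zero_add, extendWord_apply, extendWord_apply]
          exact hi)
      rw [← iterate_coded hπ, ← iterate_coded hπ, ← Function.iterate_add_apply,
        ← Function.iterate_add_apply] at hd
      refine ⟨_, ?_, hd⟩
      have : ((i : ℕ) + 1) * N ≤ K * N := Nat.mul_le_mul_right _ i.2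
      linarith
    let Q : Finset M := (supported (m := m) (wraps t 0 K)).image fun w => π (extendWord hm w)
    have hcard : Q.card = m ^ (wraps t 0 K).card := by
      rw [← card_supported hm]
      refine Finset.card_image_of_injective _ fun w w' h => ?_
      by_contra hne
      obtain ⟨j, _, hd⟩ := hsepw w w' hne
      rw [show π (extendWord hm w) = π (extendWord hm w') from h, dist_self] at hd
      linarith
    have hle := card_le_sepCount (fun Q hQ hs =>
      card_le_of_sep_codedSet hN hπ hk (K * N) Q (t := t) hQ hs) (Q := Q) (by
        intro y hy
        obtain ⟨w, hw, rfl⟩ := Finset.mem_image.1 hy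
        exact ⟨0, hN, _, extendWord_mem_sturm hm hw, rfl⟩) (by
        intro y hy y' hy' hne
        obtain ⟨w, hw, rfl⟩ := Finset.mem_image.1 hy
        obtain ⟨w', hw', rfl⟩ := Finset.mem_image.1 hy'
        exact hsepw w w' fun h => hne (by rw [h]))
    rw [hcard] at hle
    have h1 : Real.log ((m : ℝ) ^ (wraps t 0 K).card) ≤
        Real.log (sepCount f (codedSet f N π t) (K * N) κ) :=
      Real.log_le_log (by positivity) (by exact_mod_cast hle)
    rw [Real.log_pow] at h1
    refine le_trans (mul_le_mul_of_nonneg_right ?_ (Real.log_nonneg hm')) h1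
    have hw := card_wraps ht0 ht1 le_rfl one_pos K
    have hfl := (Int.sub_one_lt_floor ((K : ℝ) * t + 0)).le
    rw [← hw] at hfl
    push_cast at hfl
    linarith
  refine le_of_forall_lt fun b hb => ?_
  obtain ⟨r, hbr, hr⟩ := EReal.lt_iff_exists_real_btwn.1 hb
  refine hbr.trans_le (le_limsup_of_frequently_le ?_ (by isBoundedDefault))
  have hr' : r < t * Real.log m / N := by exact_mod_cast hr
  have htend : Tendsto (fun K : ℕ => t * Real.log m / N - (Real.log m / N) / K) atTop
      (𝓝 (t * Real.log m / N)) := by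
    simpa using tendsto_const_nhds.sub (tendsto_const_div_atTop_nhds_zero_nat (Real.log m / N))
  refine Tendsto.frequently (f := fun K : ℕ => K * N) (tendsto_id.atTop_mul_const' hN)
    (Eventually.frequently ?_)
  filter_upwards [htend.eventually (lt_mem_nhds hr'), eventually_gt_atTop 0] with K hK hK0
  have hK' : (0 : ℝ) < K := by exact_mod_cast hK0
  rw [EReal.coe_le_coe_iff]
  refine hK.le.trans ?_
  have e : t * Real.log m / N - (Real.log m / N) / K = ((K * t - 1) * Real.log m) / (K * N : ℕ) := by
    push_cast
    field_simp
  rw [e]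
  exact div_le_div_of_nonneg_right (hcount K) (Nat.cast_nonneg _)

end Coded

/-! ### Bernoulli measures of prescribed entropy -/

/-- Entropy of a probability vector varies continuously from `log m` (uniform) to `0` (point mass),
so every intermediate value is attained. -/
theorem exists_Hp_eq {m : ℕ} (hm : 0 < m) {h : ℝ} (h0 : 0 ≤ h) (h1 : h ≤ Real.log m) :
    ∃ p : Measure (Fin m), IsProbabilityMeasure p ∧ Hp p = h := by
  have hm' : (0 : ℝ) < m := by exact_mod_cast hm
  let q : ℝ → Fin m → ℝ := fun s a => (1 - s) / m + s * if a = ⟨0, hm⟩ then 1 else 0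
  have hcont : Continuous fun s => ∑ a, Real.negMulLog (q s a) :=
    continuous_finsetSum _ fun a _ => Real.continuous_negMulLog.comp (by fun_prop)
  have hq0 : ∑ a, Real.negMulLog (q 0 a) = Real.log m := by
    simp [q, Real.negMulLog]
    field_simp
  have hq1 : ∑ a, Real.negMulLog (q 1 a) = 0 := by
    refine Finset.sum_eq_zero fun a _ => ?_
    by_cases ha : a = ⟨0, hm⟩ <;> simp [q, ha]
  obtain ⟨s, hs, hse⟩ := intermediate_value_Icc' (zero_le_one' ℝ) hcont.continuousOn
    (show h ∈ Icc _ _ by simpa only [hq0, hq1] using ⟨h0, h1⟩)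
  have hqn : ∀ a, 0 ≤ q s a := fun a => by
    have : 0 ≤ 1 - s := by linarith [hs.2]
    have := hs.1
    simp only [q]
    split_ifs <;> positivity
  have hqs : ∑ a, q s a = 1 := by
    simp only [q, Finset.sum_add_distrib, ← Finset.mul_sum]
    simp
    field_simp
    ring
  have hreal : ∀ a, (∑ b, ENNReal.ofReal (q s b) • Measure.dirac b : Measure (Fin m)) {a} =
      ENNReal.ofReal (q s a) := by
    intro a
    rw [Measure.finsetSum_apply, Finset.sum_eq_single a]
    · simp
    · intro b _ hb
      simp [hb]
    · simp
  refine ⟨∑ b, ENNReal.ofReal (q s b) • Measure.dirac b, ⟨?_⟩, ?_⟩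
  · rw [Measure.finsetSum_apply]
    simp only [Measure.smul_apply, measure_univ, smul_eq_mul, mul_one]
    rw [← ENNReal.ofReal_sum_of_nonneg fun a _ => hqn a, hqs, ENNReal.ofReal_one]
  · rw [← hse]
    unfold Hp
    refine Finset.sum_congr rfl fun a _ => ?_
    rw [Measure.real, hreal, ENNReal.toReal_ofReal (hqn a)]

/-! ### The invariant measure carried by the coded horseshoe -/

section Tower

variable {M : Type*} [MetricSpace M] [MeasurableSpace M] [BorelSpace M]
  {m N : ℕ} {f : M → M} {π : (ℤ → Fin m) → M}

/-- The average over one period `0 ≤ j < N` of the images under `f^[j] ∘ π` of a Bernoulli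
measure. -/
noncomputable def tower (f : M → M) (N : ℕ) (π : (ℤ → Fin m) → M) (p : Measure (Fin m))
    [IsProbabilityMeasure p] : Measure M :=
  (N : ℝ≥0∞)⁻¹ • ∑ j ∈ Finset.range N, (bern p).map fun s => f^[j] (π s)

variable (p : Measure (Fin m)) [IsProbabilityMeasure p]

theorem measurable_level (hf : Continuous f) (hc : Continuous π) (j : ℕ) :
    Measurable fun s => f^[j] (π s) :=
  ((hf.iterate j).comp hc).measurable

theorem tower_apply (hf : Continuous f) (hc : Continuous π) {A : Set M} (hA : MeasurableSet A) :
    tower f N π p A =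
      (N : ℝ≥0∞)⁻¹ * ∑ j ∈ Finset.range N, bern p ((fun s => f^[j] (π s)) ⁻¹' A) := by
  rw [tower, Measure.smul_apply, Measure.finsetSum_apply, smul_eq_mul]
  congr 1
  exact Finset.sum_congr rfl fun j _ => Measure.map_apply (measurable_level hf hc j) hA

theorem isProbabilityMeasure_tower (hf : Continuous f) (hN : 0 < N) (hc : Continuous π) :
    IsProbabilityMeasure (tower f N π p) := by
  refine ⟨?_⟩
  rw [tower_apply p hf hc MeasurableSet.univ]
  simp only [preimage_univ, measure_univ, Finset.sum_const, Finset.card_range, nsmul_eq_mul,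
    mul_one]
  exact ENNReal.inv_mul_cancel (by exact_mod_cast hN.ne') (ENNReal.natCast_ne_top N)

theorem tower_real (hf : Continuous f) (hc : Continuous π) {A : Set M} (hA : MeasurableSet A) :
    (tower f N π p).real A =
      ∑ j ∈ Finset.range N, (N : ℝ)⁻¹ * (bern p).real ((fun s => f^[j] (π s)) ⁻¹' A) := by
  rw [Measure.real, tower_apply p hf hc hA, ENNReal.toReal_mul, ENNReal.toReal_sum
    (fun _ _ => measure_ne_top _ _), ENNReal.toReal_inv, ENNReal.toReal_natCast, Finset.mul_sum]
  rfl

theorem ergodic_tower (hf : Continuous f) (hN : 0 < N) (hc : Continuous π)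
    (hπ : ∀ s, f^[N] (π s) = π (fullShift (Fin m) s)) : Ergodic f (tower f N π p) := by
  have hsh := measurePreserving_shift p
  have hpm := isProbabilityMeasure_tower p hf hN hc
  have hmp : MeasurePreserving f (tower f N π p) (tower f N π p) := by
    refine ⟨hf.measurable, Measure.ext fun A hA => ?_⟩
    rw [Measure.map_apply hf.measurable hA, tower_apply p hf hc hA,
      tower_apply p hf hc (hf.measurable hA)]
    congr 1
    obtain ⟨K, rfl⟩ : ∃ K, N = K + 1 := ⟨N - 1, by omega⟩
    rw [Finset.sum_range_succ, Finset.sum_range_succ']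
    -- moving up one level is exact below the top; the top level returns to the base by the shift
    congr 1
    · refine Finset.sum_congr rfl fun j _ => ?_
      congr 1
      ext s
      simp [Function.iterate_succ_apply']
    · rw [← hsh.measure_preimage (measurable_level hf hc 0 hA).nullMeasurableSet]
      congr 1
      ext s
      simp [← hπ, Function.iterate_succ_apply']
  refine ⟨hmp, ⟨fun A hA hinv => ?_⟩⟩
  have hlev : ∀ j, (fun s => f^[j] (π s)) ⁻¹' A = π ⁻¹' A := by
    intro j
    have : f^[j] ⁻¹' A = A := by
      rw [preimage_iterate_eq]
      exact Function.iterate_fixed hinv j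
    exact congrArg (π ⁻¹' ·) this
  have hreal : (tower f N π p).real A = (bern p).real (π ⁻¹' A) := by
    rw [tower_real p hf hc hA]
    simp only [hlev, Finset.sum_const, Finset.card_range, nsmul_eq_mul]
    field_simp
  have hbase : fullShift (Fin m) ⁻¹' (π ⁻¹' A) = π ⁻¹' A := by
    conv_rhs => rw [← hlev N]
    ext s
    simp [hπ]
  rw [Filter.eventuallyConst_set']
  rcases bern_zero_one p (hc.measurable hA) hbase with h | h
  · left
    rw [ae_eq_empty]
    rw [h] at hreal
    exact (measureReal_eq_zero_iff).1 hreal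
  · right
    rw [ae_eq_univ, prob_compl_eq_zero_iff hA]
    rw [h] at hreal
    rwa [Measure.real, ENNReal.toReal_eq_one_iff] at hreal

/-- Concavity: the entropy of an average is at least the average entropy. -/
theorem le_shEnt_tower (hf : Continuous f) (hN : 0 < N) (hc : Continuous π) {F : Type*} [Fintype F]
    {X : M → F} (hX : FMeas X) :
    ∑ j ∈ Finset.range N, (N : ℝ)⁻¹ * shEnt (bern p) (fun s => X (f^[j] (π s))) ≤
      shEnt (tower f N π p) X := by
  unfold shEnt
  simp only [Finset.mul_sum]
  rw [Finset.sum_comm]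
  refine Finset.sum_le_sum fun a _ => ?_
  rw [tower_real p hf hc (hX a)]
  have := Real.concaveOn_negMulLog.le_map_sum (t := Finset.range N) (w := fun _ => (N : ℝ)⁻¹)
    (p := fun j => (bern p).real ((fun s => f^[j] (π s)) ⁻¹' (X ⁻¹' {a})))
    (fun _ _ => by positivity) (by simp; field_simp) (fun _ _ => measureReal_nonneg)
  simp only [smul_eq_mul] at this
  exact this

/-- The entropy of an average of `N` measures exceeds the average entropy by at most `log N`. -/
theorem shEnt_tower_le (hf : Continuous f) (hN : 0 < N) (hc : Continuous π) {F : Type*} [Fintype F]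
    {X : M → F} (hX : FMeas X) :
    shEnt (tower f N π p) X ≤ Real.log N +
      ∑ j ∈ Finset.range N, (N : ℝ)⁻¹ * shEnt (bern p) (fun s => X (f^[j] (π s))) := by
  have hN' : (0 : ℝ) < N := by exact_mod_cast hN
  have hm : ∀ j, FMeas fun s => X (f^[j] (π s)) := fun j =>
    hX.comp_measurable (measurable_level hf hc j)
  have hone : ∀ j, ∑ a, (bern p).real ((fun s => X (f^[j] (π s))) ⁻¹' {a}) = 1 := by
    intro j
    rw [← measureReal_preimage_eq_sum (bern p) (hm j)]
    simp
  have hstep : ∀ j, ∑ a, Real.negMulLog ((N : ℝ)⁻¹ *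
      (bern p).real ((fun s => X (f^[j] (π s))) ⁻¹' {a})) =
      (N : ℝ)⁻¹ * Real.log N + (N : ℝ)⁻¹ * shEnt (bern p) (fun s => X (f^[j] (π s))) := by
    intro j
    simp only [Real.negMulLog_mul, Finset.sum_add_distrib, ← Finset.mul_sum, ← Finset.sum_mul,
      hone, shEnt]
    simp [Real.negMulLog]
  calc shEnt (tower f N π p) X
      = ∑ a, Real.negMulLog (∑ j ∈ Finset.range N, (N : ℝ)⁻¹ *
          (bern p).real ((fun s => X (f^[j] (π s))) ⁻¹' {a})) :=
        Finset.sum_congr rfl fun a _ => by rw [tower_real p hf hc (hX a)]; rfl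
    _ ≤ ∑ a, ∑ j ∈ Finset.range N, Real.negMulLog ((N : ℝ)⁻¹ *
          (bern p).real ((fun s => X (f^[j] (π s))) ⁻¹' {a})) :=
        Finset.sum_le_sum fun a _ => negMulLog_sum_le _ _ fun j => by positivity
    _ = _ := by
        rw [Finset.sum_comm]
        simp only [hstep, Finset.sum_add_distrib]
        simp
        field_simp

/-! ### Entropy of the tower measure -/

theorem exists_lab {α : Type*} [MeasurableSpace α] {P : Finset (Set α)} (hP : IsMeasPartition P) :
    ∃ lab : α → {q // q ∈ P}, ∀ x q, lab x = q ↔ x ∈ (q : Set α) := by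
  have hex : ∀ x, ∃ q : {q // q ∈ P}, x ∈ (q : Set α) := by
    intro x
    have hx : x ∈ ⋃₀ (P : Set (Set α)) := hP.2.1 ▸ mem_univ x
    obtain ⟨q, hq, hxq⟩ := hx
    exact ⟨⟨q, hq⟩, hxq⟩
  choose lab hlab using hex
  refine ⟨lab, fun x q => ⟨fun h => h ▸ hlab x, fun h => ?_⟩⟩
  by_contra hne
  exact (Set.disjoint_left.1 (hP.2.2 (lab x).2 q.2 (fun h' => hne (Subtype.ext h')))) (hlab x) h

theorem fmeas_lab {α : Type*} [MeasurableSpace α] {P : Finset (Set α)} (hP : IsMeasPartition P)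
    {lab : α → {q // q ∈ P}} (hlab : ∀ x q, lab x = q ↔ x ∈ (q : Set α)) : FMeas lab := by
  intro q
  have : lab ⁻¹' {q} = q := by
    ext x
    exact hlab x q
  rw [this]
  exact hP.1 _ q.2

theorem refinedInfo_eq_shEnt {α : Type*} [MeasurableSpace α] (g : α → α) (μ : Measure α)
    {P : Finset (Set α)} {lab : α → {q // q ∈ P}} (hlab : ∀ x q, lab x = q ↔ x ∈ (q : Set α))
    (n : ℕ) : refinedInfo g μ P n = shEnt μ (fun x (i : Fin n) => lab (g^[i] x)) := by
  unfold refinedInfo shEnt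
  refine Finset.sum_congr rfl fun a _ => ?_
  have : (⋂ i : Fin n, g^[(i : ℕ)] ⁻¹' ((a i : Set α))) =
      (fun x (i : Fin n) => lab (g^[i] x)) ⁻¹' {a} := by
    ext x
    simp [funext_iff, hlab]
  rw [this, EF.negMulLog, Real.negMulLog, neg_mul]
  rfl

/-- Names of length `n` along an `f`-orbit are read off from the names of length `n / N + 2` of the
shift, for the partition of sequence space recording one full period. -/
theorem shEnt_tower_names_le (hf : Continuous f) (hN : 0 < N) (hc : Continuous π)
    (hπ : ∀ s, f^[N] (π s) = π (fullShift (Fin m) s)) {F : Type*} [Fintype F] {L : M → F}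
    (hL : FMeas L) {ε : ℝ} (hε : 0 < ε) :
    ∃ C : ℝ, ∀ n : ℕ, shEnt (tower f N π p) (fun x (i : Fin n) => L (f^[i] x)) ≤
      C + n * ((Hp p + ε) / N) := by
  have hN' : (0 : ℝ) < N := by exact_mod_cast hN
  let Z : (ℤ → Fin m) → Fin N → F := fun s i => L (f^[i] (π s))
  have hZ : FMeas Z := FMeas.pi fun i => hL.comp_measurable (measurable_level hf hc i)
  obtain ⟨C, hC⟩ := shEnt_bern_names_le p hZ hε
  have hh : 0 ≤ Hp p + ε := by linarith [Hp_nonneg p]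
  refine ⟨Real.log N + C + 2 * (Hp p + ε), fun n => ?_⟩
  have hnames : FMeas fun x (i : Fin n) => L (f^[i] x) :=
    FMeas.pi fun i => hL.comp_measurable (hf.iterate i).measurable
  have hdiv : ((n / N : ℕ) : ℝ) ≤ n / N := Nat.cast_div_le
  have hlev : ∀ j ∈ Finset.range N, (N : ℝ)⁻¹ * shEnt (bern p)
      (fun s (i : Fin n) => L (f^[i] (f^[j] (π s)))) ≤
      (N : ℝ)⁻¹ * (C + (n / N + 2) * (Hp p + ε)) := by
    intro j hj
    have hj' := Finset.mem_range.1 hj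
    refine mul_le_mul_of_nonneg_left ?_ (by positivity)
    refine (shEnt_le_of_factor (bern p) (X := fun s (i : Fin (n / N + 2)) =>
      Z ((fullShift (Fin m))^[i] s)) ?_ ?_).trans ((hC (n / N + 2)).trans ?_)
    · exact FMeas.pi fun i => hZ.comp_measurable ((measurePreserving_shift p).measurable.iterate i)
    · intro s s' hss
      ext i
      have hlt : (i + j) / N < n / N + 2 := by
        rw [Nat.div_lt_iff_lt_mul hN, add_mul]
        have := Nat.lt_div_mul_add (a := n) hN
        have := i.2
        linarith
      have key := congrFun (congrFun hss ⟨(i + j) / N, hlt⟩) ⟨(i + j) % N, Nat.mod_lt _ hN⟩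
      simp only [Z] at key
      simp only [← Function.iterate_add_apply, iterate_coded_mod hπ (i + j)]
      exact key
    · push_cast
      nlinarith
  refine (shEnt_tower_le p hf hN hc hnames).trans ?_
  have hsum := Finset.sum_le_sum hlev
  rw [Finset.sum_const, Finset.card_range, nsmul_eq_mul, mul_inv_cancel_left₀ hN'.ne'] at hsum
  refine (add_le_add_right hsum _).trans (le_of_eq ?_)
  ring

/-- Reading the symbols at the multiples of `N` gives a Bernoulli block of length about `n / N`. -/
theorem le_shEnt_tower_names (hf : Continuous f) (hN : 0 < N) (hc : Continuous π)
    (hπ : ∀ s, f^[N] (π s) = π (fullShift (Fin m) s)) {R : M → Fin m} (hR : FMeas R)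
    (hRπ : ∀ s, R (π s) = s 0) (n : ℕ) :
    (n / N - 2) * Hp p ≤ shEnt (tower f N π p) (fun x (i : Fin n) => R (f^[i] x)) := by
  have hN' : (0 : ℝ) < N := by exact_mod_cast hN
  have hnames : FMeas fun x (i : Fin n) => R (f^[i] x) :=
    FMeas.pi fun i => hR.comp_measurable (hf.iterate i).measurable
  refine le_trans ?_ (le_shEnt_tower p hf hN hc hnames)
  have hlev : ∀ j ∈ Finset.range N, (N : ℝ)⁻¹ * (((n / N - 1 : ℕ) : ℝ) * Hp p) ≤ (N : ℝ)⁻¹ *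
      shEnt (bern p) (fun s (i : Fin n) => R (f^[i] (f^[j] (π s)))) := by
    intro j hj
    have hj' := Finset.mem_range.1 hj
    refine mul_le_mul_of_nonneg_left ?_ (by positivity)
    rw [← shEnt_block p 1 (n / N - 1)]
    refine shEnt_le_of_factor (bern p) ?_ ?_
    · exact FMeas.pi fun i => hR.comp_measurable
        ((hf.iterate i).measurable.comp (measurable_level hf hc j))
    · intro s s' hss
      ext q
      have hq := q.2
      have hle : ((q : ℕ) + 2) * N ≤ n :=
        (Nat.mul_le_mul_right N (by omega)).trans (Nat.div_mul_le_self n N)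
      have hlt : ((q : ℕ) + 1) * N - j < n := by
        have : ((q : ℕ) + 2) * N = (q + 1) * N + N := by ring
        omega
      have hge : j ≤ ((q : ℕ) + 1) * N := by nlinarith [Nat.zero_le ((q : ℕ) * N)]
      have key := congrFun hss ⟨((q : ℕ) + 1) * N - j, hlt⟩
      simp only [← Function.iterate_add_apply, Nat.sub_add_cancel hge, iterate_coded hπ, hRπ,
        fullShift_iterate] at key
      have e : (0 : ℤ) + ((q + 1 : ℕ) : ℤ) = 1 + ((q : ℕ) : ℤ) := by push_cast; ring
      rw [e] at key
      exact congrArg Fin.val key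
  refine le_trans ?_ (Finset.sum_le_sum hlev)
  rw [Finset.sum_const, Finset.card_range, nsmul_eq_mul, mul_inv_cancel_left₀ hN'.ne']
  refine mul_le_mul_of_nonneg_right ?_ (Hp_nonneg p)
  have h1 : (n : ℝ) / N < ((n / N : ℕ) : ℝ) + 1 := by
    rw [div_lt_iff₀ hN']
    have := Nat.lt_div_mul_add (a := n) hN
    rw [add_mul, one_mul]
    exact_mod_cast this
  have h2 : ((n / N : ℕ) : ℝ) ≤ ((n / N - 1 : ℕ) : ℝ) + 1 := by
    exact_mod_cast (by omega : n / N ≤ n / N - 1 + 1)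
  linarith

theorem exists_read (hm : 0 < m) (hc : Continuous π) {κ : ℝ} (hκ : 0 < κ)
    (hsep : ∀ s s', s 0 ≠ s' 0 → ∃ j < N, κ < dist (f^[j] (π s)) (f^[j] (π s'))) :
    ∃ R : M → Fin m, FMeas R ∧ ∀ s, R (π s) = s 0 := by
  classical
  have hinj : ∀ s s', π s = π s' → s 0 = s' 0 := by
    intro s s' h
    by_contra hne
    obtain ⟨j, -, hj⟩ := hsep s s' hne
    rw [h, dist_self] at hj
    linarith
  let R : M → Fin m := fun x => if h : ∃ s, π s = x then h.choose 0 else ⟨0, hm⟩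
  have hRπ : ∀ s, R (π s) = s 0 := by
    intro s
    have h : ∃ s', π s' = π s := ⟨s, rfl⟩
    simp only [R, dif_pos h]
    exact hinj _ _ h.choose_spec
  refine ⟨R, fun a => ?_, hRπ⟩
  have hcl : ∀ a : Fin m, MeasurableSet (π '' {s | s 0 = a}) := fun a =>
    ((isClosed_singleton.preimage (continuous_apply (0 : ℤ))).isCompact.image hc).measurableSet
  have hrange : MeasurableSet (range π) := (isCompact_range hc).measurableSet
  have hin : R ⁻¹' {a} ∩ range π = π '' {s | s 0 = a} := by
    ext x
    constructor
    · rintro ⟨hx, s, rfl⟩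
      exact ⟨s, (hRπ s).symm.trans hx, rfl⟩
    · rintro ⟨s, hs, rfl⟩
      exact ⟨(hRπ s).trans hs, s, rfl⟩
  have hout : R ⁻¹' {a} \ range π = if a = ⟨0, hm⟩ then (range π)ᶜ else ∅ := by
    ext x
    by_cases hx : ∃ s, π s = x
    · split_ifs <;> simp [hx]
    · have : R x = ⟨0, hm⟩ := dif_neg hx
      split_ifs with ha
      · simp [hx, this, ha]
      · simp [this, Ne.symm ha]
  rw [← inter_union_sdiff (R ⁻¹' {a}) (range π), hin, hout]
  refine (hcl a).union ?_
  split_ifs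
  · exact hrange.compl
  · exact MeasurableSet.empty

theorem tendsto_affine_div (A B : ℝ) :
    Tendsto (fun n : ℕ => (A + n * B) / n) atTop (𝓝 B) := by
  have h : Tendsto (fun n : ℕ => A / n + B) atTop (𝓝 (0 + B)) :=
    (tendsto_const_div_atTop_nhds_zero_nat A).add_const B
  rw [zero_add] at h
  refine h.congr' ?_
  filter_upwards [eventually_gt_atTop 0] with n hn
  have : (n : ℝ) ≠ 0 := by exact_mod_cast hn.ne'
  field_simp

theorem measEntropy_tower (hf : Continuous f) (hN : 0 < N) (hm : 0 < m) (hc : Continuous π)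
    (hπ : ∀ s, f^[N] (π s) = π (fullShift (Fin m) s)) {κ : ℝ} (hκ : 0 < κ)
    (hsep : ∀ s s', s 0 ≠ s' 0 → ∃ j < N, κ < dist (f^[j] (π s)) (f^[j] (π s'))) :
    measEntropy f (tower f N π p) = ((Hp p / N : ℝ) : EReal) := by
  classical
  have hN' : (0 : ℝ) < N := by exact_mod_cast hN
  have hpm := isProbabilityMeasure_tower p hf hN hc
  refine le_antisymm ?_ ?_
  · refine iSup₂_le fun P hP => ?_
    rw [EReal.coe_le_coe_iff]
    obtain ⟨lab, hlab⟩ := exists_lab hP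
    refine le_of_forall_pos_le_add fun ε hε => ?_
    obtain ⟨C, hC⟩ := shEnt_tower_names_le p hf hN hc hπ (fmeas_lab hP hlab)
      (mul_pos hε hN')
    unfold partEntropy
    have hlim := tendsto_affine_div C ((Hp p + ε * N) / N)
    have hle : limsup (fun n : ℕ => refinedInfo f (tower f N π p) P n / n) atTop ≤
        limsup (fun n : ℕ => (C + n * ((Hp p + ε * N) / N)) / n) atTop := by
      refine limsup_le_limsup (Eventually.of_forall fun n => ?_) ?_ hlim.isBoundedUnder_le
      · simp only [refinedInfo_eq_shEnt f _ hlab]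
        gcongr
        exact hC n
      · refine IsCoboundedUnder.of_frequently_ge (a := 0) (Frequently.of_forall fun n => ?_)
        rw [refinedInfo_eq_shEnt f _ hlab]
        have := shEnt_nonneg (tower f N π p) (fun x (i : Fin n) => lab (f^[i] x))
        positivity
    rw [hlim.limsup_eq] at hle
    refine hle.trans (le_of_eq ?_)
    field_simp
  · obtain ⟨R, hR, hRπ⟩ := exists_read (N := N) (f := f) hm hc hκ hsep
    let P : Finset (Set M) := Finset.univ.image fun a => R ⁻¹' {a}
    have hP : IsMeasPartition P := by
      refine ⟨?_, ?_, ?_⟩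
      · intro q hq
        obtain ⟨a, -, rfl⟩ := Finset.mem_image.1 hq
        exact hR a
      · refine eq_univ_of_forall fun x => ⟨R ⁻¹' {R x}, ?_, rfl⟩
        simp [P]
      · intro q hq q' hq' hne
        obtain ⟨a, -, rfl⟩ := Finset.mem_image.1 hq
        obtain ⟨b, -, rfl⟩ := Finset.mem_image.1 hq'
        refine Disjoint.preimage R (disjoint_singleton.2 ?_)
        rintro rfl
        exact hne rfl
    refine le_trans ?_ (le_iSup₂ (f := fun (P : Finset (Set M)) (_ : IsMeasPartition P) =>
      ((partEntropy f (tower f N π p) P : ℝ) : EReal)) P hP)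
    rw [EReal.coe_le_coe_iff]
    obtain ⟨lab, hlab⟩ := exists_lab hP
    have hlabm := fmeas_lab hP hlab
    have hfac : ∀ x y, lab x = lab y → R x = R y := by
      intro x y h
      obtain ⟨a, -, ha⟩ := Finset.mem_image.1 (lab x).2
      have hx : x ∈ R ⁻¹' {a} := ha ▸ (hlab x _).1 rfl
      have hy : y ∈ R ⁻¹' {a} := ha ▸ (hlab y _).1 h.symm
      exact hx.trans hy.symm
    have hlow : ∀ n : ℕ, -2 * Hp p + n * (Hp p / N) ≤ refinedInfo f (tower f N π p) P n := by
      intro n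
      rw [refinedInfo_eq_shEnt f _ hlab]
      refine le_trans (le_of_eq ?_) ((le_shEnt_tower_names p hf hN hc hπ hR hRπ n).trans
        (shEnt_le_of_factor _ (FMeas.pi fun i : Fin n =>
          hlabm.comp_measurable (hf.iterate i).measurable) ?_))
      · ring
      · intro x y h
        ext i
        exact congrArg Fin.val (hfac _ _ (congrFun h i))
    obtain ⟨C, hC⟩ := shEnt_tower_names_le p hf hN hc hπ hlabm one_pos
    have hlim := tendsto_affine_div (-2 * Hp p) (Hp p / N)
    rw [← hlim.limsup_eq]
    unfold partEntropy
    refine limsup_le_limsup (Eventually.of_forall fun n => ?_)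
      hlim.isBoundedUnder_ge.isCoboundedUnder_le ?_
    · dsimp only
      gcongr
      exact hlow n
    · refine (tendsto_affine_div C ((Hp p + 1) / N)).isBoundedUnder_le.mono_le
        (Eventually.of_forall fun n => ?_)
      simp only [refinedInfo_eq_shEnt f _ hlab]
      gcongr
      exact hC n

end Tower

/-- Every expansive homeomorphism with the shadowing property of a
compact metric space has entropy flexibility. -/
theorem expansive_shadowing_entropy_flexibility
    {M : Type*} [MetricSpace M] [CompactSpace M] [MeasurableSpace M] [BorelSpace M]
    (f : M → M) (hf : IsHomeomorph f) (hexp : Expansive f) (hsh : ShadowingProperty f) :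
    ∀ c : ℝ, 0 ≤ c → (c : EReal) < topEntropy f →
      ∃ (Λ : Set M) (μ : MeasureTheory.Measure M), IsCompact Λ ∧ f '' Λ = Λ ∧
        MeasureTheory.IsProbabilityMeasure μ ∧ Ergodic f μ ∧
        topEntropyOn f Λ = (c : EReal) ∧ measEntropy f μ = (c : EReal) := by
  intro c hc h
  obtain ⟨m, N, π, κ, hN, hκ, hlog, hπc, hπ, hsep⟩ := exists_coded_horseshoe hf hexp hsh hc h
  have hN' : (0 : ℝ) < N := by exact_mod_cast hN
  have hlogpos : 0 < Real.log m := lt_of_le_of_lt (by positivity) hlog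
  have hm : 0 < m := by
    rcases Nat.eq_zero_or_pos m with rfl | hm
    · simp at hlogpos
    · exact hm
  obtain ⟨p, hp, hpe⟩ := exists_Hp_eq hm (h := c * N) (by positivity) hlog.le
  -- the density for which a rotation-driven subshift on `m` symbols has entropy `c * N`
  have ht0 : 0 ≤ c * N / Real.log m := by positivity
  have ht1 : c * N / Real.log m ≤ 1 := (div_le_one hlogpos).2 hlog.le
  have hval : c * N / Real.log m * Real.log m / N = c := by
    field_simp
  refine ⟨codedSet f N π (c * N / Real.log m), tower f N π p,
    isCompact_codedSet hf.continuous hπc _, image_codedSet hN hπ _,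
    isProbabilityMeasure_tower p hf.continuous hN hπc,
    ergodic_tower p hf.continuous hN hπc hπ, ?_, ?_⟩
  · have h1 := topEntropyOn_codedSet_le hf.continuous hN hm hπc hπ ht0 ht1
    have h2 := le_topEntropyOn_codedSet hf.continuous hN hm hπc hπ hκ hsep ht0 ht1
    rw [hval] at h1 h2
    exact le_antisymm h1 h2
  · rw [measEntropy_tower p hf.continuous hN hm hπc hπ hκ hsep, hpe]
    congr 1
    field_simp
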